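/- arXiv:1609.06253 — 2 statements merged into one kernel-verified Lean document; each statement's English description precedes it below -/
import Mathlib

section
/- Let H, G₁, G₂ be groups with H finitely generated, and let φ₁ : H → G₁ and φ₂ : H → G₂ be injective group homomorphisms. If G₁ is autostackable respecting the subgroup φ₁(H) and G₂ is autostackable respecting the subgroup φ₂(H), then the amalgamated free product G₁ ∗_H G₂ (the pushout of φ₁ and φ₂ in the category of groups) is autostackable. -/
/-!
The amalgamated product is treated as the pushout `Monoid.PushoutI φ` of a finite family of groups
`G i` over `H`, and the generators are the disjoint union of the alphabets of the factors.

*Normal forms.* Fix an index `i₀`. The normal forms are the words consisting of a normal form of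
the subgroup over the alphabet of `G i₀`, followed by nonempty transversal words of the factors,
neighbouring ones belonging to different factors. Since the alphabets are disjoint, a word
determines its syllables, and `NP_nf` is the normal form theorem for amalgamated products
(`Monoid.PushoutI.NormalWord`). The prefix-closed language `NP` describes these words by a
condition on the longest one-factor suffix of each prefix, which a finite automaton can check
(`reg_NP`).

*Stacking function.* A letter `a` of the factor `i`, read after a normal form `y`, is handled as
follows (`phiP`). If `a` is a generator of the subgroup and `y` ends in another factor `j`, then `a`
is replaced by a word over the subgroup generators of the factor `j`. Otherwise the stacking
function of the factor `i` is applied to `a` and the longest suffix of `y` over the alphabet of `i`.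

*Termination* (`stP_wellFounded`). Each translate of a Cayley graph of a factor `i` is based at the
elements `q` whose normal form does not end in a transversal word of `i`. By translation invariance
the flow on its edges follows the flow of the factor, which is well-founded, until it reaches an
edge in the base coset `q H` labelled by a generator of the subgroup (`accE_coset`). Such edges are
handled by induction on the number of syllables of `q` (`accE_subgroup`): the flow first changes to
the factor `j` of the last syllable of `q` (`accE_rewr`), and then `q` lies in a translate of the
factor `j` based at elements with fewer syllables. With no syllables left, subgroup closure in the
factor `i₀` keeps the flow inside the subgroup, where it terminates (`accE_base`).

*Regularity.* As the stacking function has finitely many values, its graph is synchronously regular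
once all sets `{y ∈ N : φ(y, a) = v}` are regular (`isAuto_of_fibres`); these sets depend only on
the last letter of `y` and on regular conditions on its last syllable (`isAuto_P`).

Finally, `amalgEquiv` identifies the pushout of two groups with the quotient of their free product.
-/

/-- Evaluation of a word over an alphabet `α` in a monoid `G` via a letter map `π`. -/
def wordVal {G : Type} [Monoid G] {α : Type} (π : α → G) (w : List α) : G :=
  (w.map π).prod

/-- A language is prefix-closed if it contains every prefix of each of its words. -/
def PrefixClosed {α : Type} (N : Set (List α)) : Prop :=
  ∀ w ∈ N, ∀ p : List α, p <+: w → p ∈ N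

/-- `(α, π, inv)` is a finite inverse-closed generating set for the group `G`:
no letter represents the identity, `inv` is an involution with `π (inv a) = (π a)⁻¹`,
and the letters generate `G`. -/
structure IsInvGenSet (G : Type) [Group G] {α : Type} (π : α → G) (inv : α → α) : Prop where
  ne_one : ∀ a, π a ≠ 1
  inv_invol : ∀ a, inv (inv a) = a
  val_inv : ∀ a, π (inv a) = (π a)⁻¹
  gen : Subgroup.closure (Set.range π) = ⊤

/-- A language over `α` is regular if it is accepted by a finite state automaton. -/
def IsRegularLang {α : Type} (L : Set (List α)) : Prop :=
  ∃ (σ : Type) (_ : Fintype σ) (M : DFA α σ), M.accepts = L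

/-- The padded word over `(α ∪ {$})²` corresponding to a pair of words;
`none` plays the role of the padding symbol `$`. -/
def padWord2 {α : Type} (p : List α × List α) : List (Option α × Option α) :=
  (List.range (max p.1.length p.2.length)).map (fun i => (p.1[i]?, p.2[i]?))

/-- Synchronous regularity of a set of pairs of words. -/
def SyncRegular2 {α : Type} (L : Set (List α × List α)) : Prop :=
  IsRegularLang (padWord2 '' L)

/-- The padded word over `(α ∪ {$})³` corresponding to a triple of words. -/
def padWord3 {α : Type} (p : List α × List α × List α) :
    List (Option α × Option α × Option α) :=
  (List.range (max p.1.length (max p.2.1.length p.2.2.length))).map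
    (fun i => (p.1[i]?, p.2.1[i]?, p.2.2[i]?))

/-- Synchronous regularity of a set of triples of words. -/
def SyncRegular3 {α : Type} (L : Set (List α × List α × List α)) : Prop :=
  IsRegularLang (padWord3 '' L)

structure StackingData (α : Type) where
  N : Set (List α)
  K : ℕ
  phi : List α → α → List α

/-- `st` is a stackable structure for `G` over the finite inverse-closed generating
set `(α, π, inv)`. -/
structure IsStacking (G : Type) [Group G] {α : Type} (π : α → G) (inv : α → α)
    (st : StackingData α) : Prop where
  gen : IsInvGenSet G π inv
  nf : ∀ g : G, ∃! w, w ∈ st.N ∧ wordVal π w = g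
  prefixClosed : PrefixClosed st.N
  F1 : ∀ y ∈ st.N, ∀ a : α, wordVal π (st.phi y a) = π a ∧ (st.phi y a).length ≤ st.K
  F2 : ∀ y ∈ st.N, ∀ a : α, (y ++ [a] ∈ st.N ∨ ∃ y', y = y' ++ [inv a]) → st.phi y a = [a]
  F3 : ¬ ∃ seq : ℕ → List α × α,
      ∀ i : ℕ, (seq i).1 ∈ st.N ∧ (seq i).1 ++ [(seq i).2] ∉ st.N ∧
        (¬ ∃ y', (seq i).1 = y' ++ [inv (seq i).2]) ∧
        ∃ u u' : List α, st.phi (seq i).1 (seq i).2 = u ++ (seq (i+1)).2 :: u' ∧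
          (seq (i+1)).1 ∈ st.N ∧
          wordVal π ((seq (i+1)).1) = wordVal π ((seq i).1 ++ u)

/-- The regularity conditions making a stackable structure autostackable:
the set of normal forms is regular and the graph of the stacking function is
synchronously regular. -/
def StackingData.IsAuto {α : Type} (st : StackingData α) : Prop :=
  IsRegularLang st.N ∧
  SyncRegular3 {t : List α × List α × List α | ∃ y ∈ st.N, ∃ a : α, t = (y, [a], st.phi y a)}

/-- The stacking structure `st` respects the subgroup `H`. -/
def RespectsSubgroup {G : Type} [Group G] {α : Type} (π : α → G) (inv : α → α)
    (st : StackingData α) (H : Subgroup G) : Prop :=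
  ∃ B : Set α,
    (∀ b ∈ B, inv b ∈ B) ∧
    (∀ b ∈ B, π b ∈ H) ∧
    Subgroup.closure (π '' B) = H ∧
    ∃ NH NTr : Set (List α),
      (∀ w ∈ NH, ∀ b ∈ w, b ∈ B) ∧
      PrefixClosed NH ∧
      (∀ h : G, h ∈ H → ∃! w, w ∈ NH ∧ wordVal π w = h) ∧
      PrefixClosed NTr ∧
      (∀ g : G, ∃! w, w ∈ NTr ∧ wordVal π w * g⁻¹ ∈ H) ∧
      st.N = {w | ∃ u ∈ NH, ∃ v ∈ NTr, w = u ++ v} ∧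
      (∀ y ∈ st.N, wordVal π y ∈ H → ∀ b ∈ B, ∀ c ∈ st.phi y b, c ∈ B) ∧
      (∀ a : α, ∀ y ∈ st.N, ∀ y' ∈ st.N,
        ¬(wordVal π y ∈ H ∧ a ∈ B) →
        (∃ h ∈ H, wordVal π y' = h * wordVal π y) → st.phi y' a = st.phi y a)

/-- A group is autostackable if it admits an autostackable structure over some
finite inverse-closed generating set. -/
def Autostackable (G : Type) [Group G] : Prop :=
  ∃ (α : Type) (_ : Fintype α) (π : α → G) (inv : α → α) (st : StackingData α),
    IsStacking G π inv st ∧ st.IsAuto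

/-- A group is stackable if it admits a stackable structure over some
finite inverse-closed generating set. -/
def Stackable (G : Type) [Group G] : Prop :=
  ∃ (α : Type) (_ : Fintype α) (π : α → G) (inv : α → α) (st : StackingData α),
    IsStacking G π inv st

/-- `G` is autostackable respecting the subgroup `H`. -/
def AutostackableRespecting (G : Type) [Group G] (H : Subgroup G) : Prop :=
  ∃ (α : Type) (_ : Fintype α) (π : α → G) (inv : α → α) (st : StackingData α),
    IsStacking G π inv st ∧ st.IsAuto ∧ RespectsSubgroup π inv st H

/-- `G` is stackable respecting the subgroup `H`. -/
def StackableRespecting (G : Type) [Group G] (H : Subgroup G) : Prop :=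
  ∃ (α : Type) (_ : Fintype α) (π : α → G) (inv : α → α) (st : StackingData α),
    IsStacking G π inv st ∧ RespectsSubgroup π inv st H

/-! ### Regular languages -/

/-- A language is regular if it is a union of fibres of a map to a finite set whose kernel is a
right congruence. -/
theorem reg_of_kernel {α σ : Type} [Finite σ] (f : List α → σ)
    (hf : ∀ w w' a, f w = f w' → f (w ++ [a]) = f (w' ++ [a])) (S : Set σ) :
    IsRegularLang {w | f w ∈ S} := by
  classical
  let step : σ → α → σ := fun s a => if h : ∃ w, f w = s then f (h.choose ++ [a]) else s
  let M : DFA α σ := ⟨step, f [], S⟩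
  have hev : ∀ w, M.eval w = f w := by
    intro w
    induction w using List.reverseRecOn with
    | nil => rfl
    | append_singleton w a ih =>
      rw [DFA.eval_append_singleton, ih]
      have h : ∃ w', f w' = f w := ⟨w, rfl⟩
      change (if h : ∃ w', f w' = f w then f (h.choose ++ [a]) else f w) = _
      rw [dif_pos h]
      exact hf _ _ _ h.choose_spec
  refine ⟨σ, Fintype.ofFinite σ, M, ?_⟩
  ext w
  rw [DFA.mem_accepts, hev]
  rfl

/-- The state reached by an automaton recognising `L`, as a function of the word read. -/
theorem IsRegularLang.exists_kernel {α : Type} {L : Set (List α)} (h : IsRegularLang L) :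
    ∃ (σ : Type) (_ : Finite σ) (f : List α → σ) (S : Set σ),
      (∀ w w' a, f w = f w' → f (w ++ [a]) = f (w' ++ [a])) ∧ ∀ w, w ∈ L ↔ f w ∈ S := by
  obtain ⟨σ, hσ, M, rfl⟩ := h
  refine ⟨σ, Finite.of_fintype σ, M.eval, M.accept, ?_, fun w => Iff.rfl⟩
  intro w w' a h
  rw [DFA.eval_append_singleton, DFA.eval_append_singleton, h]

theorem reg_iUnion {α κ : Type} [Finite κ] {L : κ → Set (List α)}
    (h : ∀ k, IsRegularLang (L k)) : IsRegularLang (⋃ k, L k) := by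
  choose σ hσ f S hf hS using fun k => (h k).exists_kernel
  have := reg_of_kernel (fun w k => f k w)
    (fun w w' a hw => funext fun k => hf k _ _ a (congrFun hw k)) {s | ∃ k, s k ∈ S k}
  convert this using 1
  ext w
  simp [hS]

theorem IsRegularLang.union {α : Type} {L M : Set (List α)} (h : IsRegularLang L)
    (h' : IsRegularLang M) : IsRegularLang (L ∪ M) :=
  Language.IsRegular.add h h'

theorem IsRegularLang.inter {α : Type} {L M : Set (List α)} (h : IsRegularLang L)
    (h' : IsRegularLang M) : IsRegularLang (L ∩ M) :=
  Language.IsRegular.inf h h'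

theorem reg_empty {α : Type} : IsRegularLang (∅ : Set (List α)) := by
  simpa using reg_of_kernel (fun _ : List α => ()) (fun _ _ _ _ => rfl) ∅

/-- Prefixing a fixed letter preserves regularity. -/
theorem IsRegularLang.cons {α : Type} {L : Set (List α)} (h : IsRegularLang L) (c : α) :
    IsRegularLang (List.cons c '' L) := by
  classical
  obtain ⟨σ, hσ, f, S, hf, hS⟩ := h.exists_kernel
  let g : List α → Option (Option σ) := fun w => match w with
    | [] => none
    | c' :: w => if c' = c then some (some (f w)) else some none
  have := reg_of_kernel g (by
    intro w w' a hw
    rcases w with _ | ⟨x, w⟩ <;> rcases w' with _ | ⟨x', w'⟩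
    · rfl
    · simp only [g] at hw; split_ifs at hw
    · simp only [g] at hw; split_ifs at hw
    · simp only [g, List.cons_append] at hw ⊢
      split_ifs at hw ⊢ <;> simp_all
      exact hf _ _ _ hw) {s | ∃ t ∈ S, s = some (some t)}
  convert this using 1
  ext w
  rcases w with _ | ⟨x, w⟩
  · simp [g]
  · by_cases hx : x = c
    · subst hx; simp [g, hS]
    · simp [g, hx, Ne.symm hx]

theorem reg_singleton {α : Type} (w : List α) : IsRegularLang {w} := by
  induction w with
  | nil =>
    have := reg_of_kernel (fun w : List α => w.isEmpty)
      (by intro w w' a _; cases w <;> cases w' <;> rfl) {true}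
    convert this using 1
    ext w; simp
  | cons c w ih => simpa using ih.cons c

theorem IsRegularLang.quot {α : Type} {L : Set (List α)} (h : IsRegularLang L) (c : α) :
    IsRegularLang {w | c :: w ∈ L} := by
  obtain ⟨σ, hσ, f, S, hf, hS⟩ := h.exists_kernel
  have := reg_of_kernel (fun w => f (c :: w)) (fun w w' a hw => hf _ _ a hw) S
  convert this using 1
  ext w; simp [hS]

theorem IsRegularLang.preimage_map {α β : Type} {L : Set (List β)} (h : IsRegularLang L)
    (e : α → β) : IsRegularLang {w | w.map e ∈ L} := by
  obtain ⟨σ, hσ, f, S, hf, hS⟩ := h.exists_kernel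
  have := reg_of_kernel (fun w => f (w.map e)) (fun w w' a hw => by simpa using hf _ _ _ hw) S
  convert this using 1
  ext w; simp [hS]

/-- The image of a regular language under an injective relabelling of letters, with partial
inverse `d`, is regular. -/
theorem IsRegularLang.image_map {α β : Type} {L : Set (List α)} (h : IsRegularLang L)
    (e : α → β) (d : β → Option α) (hd : ∀ a, d (e a) = some a) :
    IsRegularLang (List.map e '' L) := by
  classical
  obtain ⟨σ, hσ, f, S, hf, hS⟩ := h.exists_kernel
  have := reg_of_kernel (fun w => (decide (∀ b ∈ w, b ∈ Set.range e), f (w.filterMap d))) (by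
    intro w w' b hw
    simp only [Prod.mk.injEq, decide_eq_decide] at hw
    obtain ⟨h1, h2⟩ := hw
    refine Prod.ext ?_ ?_
    · simp only [List.mem_append, or_imp, forall_and, h1]
    · simp only [List.filterMap_append]
      cases hb : d b with
      | none => simpa [hb] using h2
      | some a => simpa [hb] using hf _ _ a h2) {p | p.1 = true ∧ p.2 ∈ S}
  convert this using 1
  ext w
  simp only [Set.mem_image, Set.mem_ofPred_eq, decide_eq_true_eq, ← hS]
  have hde : ∀ v : List α, (v.map e).filterMap d = v := by
    intro v; induction v with
    | nil => rfl
    | cons a v ih => simp [hd, ih]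
  constructor
  · rintro ⟨v, hv, rfl⟩
    refine ⟨by simp, ?_⟩
    rwa [hde]
  · rintro ⟨hw, hv⟩
    obtain ⟨v, rfl⟩ : ∃ v : List α, v.map e = w := by
      change w ∈ Set.range (List.map e)
      rw [Set.range_list_map]; exact hw
    exact ⟨v, by rwa [hde] at hv, rfl⟩

/-! ### Padded triples -/

theorem padWord3_cons {α : Type} (c : α) (y x z : List α) :
    padWord3 (c :: y, x, z) = (some c, x.head?, z.head?) :: padWord3 (y, x.tail, z.tail) := by
  have : max (c :: y).length (max x.length z.length) =
      max y.length (max x.tail.length z.tail.length) + 1 := by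
    simp only [List.length_cons, List.length_tail]; omega
  unfold padWord3
  simp only [this, List.range_succ_eq_map, List.map_cons, List.map_map]
  congr 1
  · simp [List.head?_eq_getElem?]
  · apply List.map_congr_left
    intro i _
    simp

theorem padWord3_nil {α : Type} (y : List α) :
    padWord3 (y, [], []) = y.map (fun c => (some c, none, none)) := by
  induction y with
  | nil => rfl
  | cons c y ih => rw [padWord3_cons]; simp [ih]

theorem padWord3_getElem? {α : Type} (p : List α × List α × List α) (i : ℕ) :
    ((padWord3 p)[i]?.getD (none, none, none)) = (p.1[i]?, p.2.1[i]?, p.2.2[i]?) := by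
  unfold padWord3
  rw [List.getElem?_map]
  rcases lt_or_ge i (max p.1.length (max p.2.1.length p.2.2.length)) with h | h
  · simp [List.getElem?_range h]
  · simp only [max_le_iff] at h
    rw [List.getElem?_eq_none (by simpa using h), List.getElem?_eq_none h.1,
      List.getElem?_eq_none h.2.1, List.getElem?_eq_none h.2.2]
    rfl

theorem padWord3_injective {α : Type} : Function.Injective (padWord3 (α := α)) := by
  rintro ⟨y, x, z⟩ ⟨y', x', z'⟩ h
  have key : ∀ i, (y[i]?, x[i]?, z[i]?) = (y'[i]?, x'[i]?, z'[i]?) := fun i => by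
    rw [← padWord3_getElem? (y, x, z), h, padWord3_getElem?]
  simp only [Prod.mk.injEq] at key ⊢
  exact ⟨List.ext_getElem? fun i => (key i).1, List.ext_getElem? fun i => (key i).2.1,
    List.ext_getElem? fun i => (key i).2.2⟩

/-- Padding a regular language against two fixed words yields a regular language. -/
theorem reg_pad {α : Type} [Finite α] (n : ℕ) : ∀ {L : Set (List α)} (x z : List α),
    IsRegularLang L → x.length ≤ n → z.length ≤ n →
      IsRegularLang ((fun y => padWord3 (y, x, z)) '' L) := by
  induction n with
  | zero =>
    intro L x z h hx hz
    obtain rfl := List.length_eq_zero_iff.1 (Nat.le_zero.1 hx)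
    obtain rfl := List.length_eq_zero_iff.1 (Nat.le_zero.1 hz)
    simp only [padWord3_nil]
    exact h.image_map _ (fun p => p.1) (fun a => rfl)
  | succ n ih =>
    intro L x z h hx hz
    have h1 : IsRegularLang (⋃ c : α, List.cons (some c, x.head?, z.head?) ''
        ((fun y => padWord3 (y, x.tail, z.tail)) '' {w | c :: w ∈ L})) :=
      reg_iUnion fun c => (ih x.tail z.tail (h.quot c) (by simp; omega) (by simp; omega)).cons _
    have h2 : IsRegularLang {w | w = padWord3 ([], x, z) ∧ ([] : List α) ∈ L} := by
      by_cases hL : [] ∈ L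
      · simpa [hL] using reg_singleton _
      · simpa [hL] using reg_empty
    convert h1.union h2 using 1
    ext w
    simp only [Set.mem_image, Set.mem_union, Set.mem_iUnion, Set.mem_ofPred_eq,
      exists_exists_and_eq_and]
    constructor
    · rintro ⟨_ | ⟨c, y⟩, hy, rfl⟩
      · exact Or.inr ⟨rfl, hy⟩
      · exact Or.inl ⟨c, y, hy, (padWord3_cons _ _ _ _).symm⟩
    · rintro (⟨c, y, hy, rfl⟩ | ⟨rfl, hy⟩)
      · exact ⟨c :: y, hy, padWord3_cons _ _ _ _⟩
      · exact ⟨[], hy, rfl⟩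

/-- The words whose padding against two fixed words lies in a regular language form a regular
language. -/
theorem reg_unpad {α : Type} [Finite α] (n : ℕ) :
    ∀ {R : Set (List (Option α × Option α × Option α))} (x z : List α),
    IsRegularLang R → x.length ≤ n → z.length ≤ n →
      IsRegularLang {y | padWord3 (y, x, z) ∈ R} := by
  induction n with
  | zero =>
    intro R x z h hx hz
    obtain rfl := List.length_eq_zero_iff.1 (Nat.le_zero.1 hx)
    obtain rfl := List.length_eq_zero_iff.1 (Nat.le_zero.1 hz)
    simp only [padWord3_nil]
    exact h.preimage_map _
  | succ n ih =>
    intro R x z h hx hz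
    have h1 : IsRegularLang (⋃ c : α, List.cons c ''
        {y | padWord3 (y, x.tail, z.tail) ∈ {w | (some c, x.head?, z.head?) :: w ∈ R}}) :=
      reg_iUnion fun c => (ih x.tail z.tail (h.quot _) (by simp; omega) (by simp; omega)).cons _
    have h2 : IsRegularLang {w : List α | w = [] ∧ padWord3 (([] : List α), x, z) ∈ R} := by
      by_cases hL : padWord3 (([] : List α), x, z) ∈ R
      · simpa [hL] using reg_singleton _
      · simpa [hL] using reg_empty
    convert h1.union h2 using 1
    ext y
    simp only [Set.mem_image, Set.mem_union, Set.mem_iUnion, Set.mem_ofPred_eq]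
    constructor
    · intro hy
      rcases y with _ | ⟨c, y⟩
      · exact Or.inr ⟨rfl, hy⟩
      · exact Or.inl ⟨c, y, by rwa [padWord3_cons] at hy, rfl⟩
    · rintro (⟨c, y, hy, rfl⟩ | ⟨rfl, hy⟩)
      · rwa [padWord3_cons]
      · exact hy

/-- For a stacking function with bounded values, synchronous regularity of the graph amounts to
regularity of each fibre `{y ∈ N : φ(y,a) = v}`. -/
theorem isAuto_of_fibres {α : Type} [Finite α] {st : StackingData α} (hN : IsRegularLang st.N)
    (hK : ∀ y ∈ st.N, ∀ a, (st.phi y a).length ≤ st.K)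
    (h : ∀ a v, IsRegularLang {y | y ∈ st.N ∧ st.phi y a = v}) : st.IsAuto := by
  refine ⟨hN, ?_⟩
  have : Finite {v : List α // v.length ≤ st.K} := List.finite_length_le α st.K
  have key : IsRegularLang (⋃ p : α × {v : List α // v.length ≤ st.K},
      (fun y => padWord3 (y, [p.1], p.2.1)) '' {y | y ∈ st.N ∧ st.phi y p.1 = p.2.1}) :=
    reg_iUnion fun p => reg_pad (1 + st.K) _ _ (h p.1 p.2.1) (by simp) (by have := p.2.2; omega)
  unfold SyncRegular3
  convert key using 1
  ext w
  simp only [Set.mem_image, Set.mem_ofPred_eq, Set.mem_iUnion]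
  constructor
  · rintro ⟨_, ⟨y, hy, a, rfl⟩, rfl⟩
    exact ⟨(a, ⟨st.phi y a, hK y hy a⟩), y, ⟨hy, rfl⟩, rfl⟩
  · rintro ⟨⟨a, v, hv⟩, y, ⟨hy, h⟩, rfl⟩
    exact ⟨_, ⟨y, hy, a, rfl⟩, by rw [h]⟩

theorem StackingData.IsAuto.fibre {α : Type} [Finite α] {st : StackingData α} (h : st.IsAuto)
    (a : α) (v : List α) : IsRegularLang {y | y ∈ st.N ∧ st.phi y a = v} := by
  have := reg_unpad (1 + v.length) [a] v h.2 (by simp) (by omega)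
  convert this using 1
  ext y
  simp only [Set.mem_ofPred_eq, Set.mem_image]
  constructor
  · rintro ⟨hy, rfl⟩
    exact ⟨_, ⟨y, hy, a, rfl⟩, rfl⟩
  · rintro ⟨_, ⟨y', hy', a', rfl⟩, he⟩
    have := padWord3_injective he
    simp only [Prod.mk.injEq, List.cons.injEq, and_true] at this
    obtain ⟨rfl, rfl, rfl⟩ := this
    exact ⟨hy', rfl⟩

/-! ### A factor with its subgroup-respecting structure -/

section WordVal

variable {G α : Type} [Monoid G] (π : α → G)

@[simp] theorem wordVal_nil : wordVal π [] = 1 := rfl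

@[simp] theorem wordVal_cons (a : α) (w : List α) : wordVal π (a :: w) = π a * wordVal π w := by
  simp [wordVal]

@[simp] theorem wordVal_append (v w : List α) :
    wordVal π (v ++ w) = wordVal π v * wordVal π w := by
  simp [wordVal]

end WordVal

theorem wordVal_mem {G α : Type} [Group G] (π : α → G) (K : Subgroup G) (w : List α)
    (h : ∀ a ∈ w, π a ∈ K) : wordVal π w ∈ K := by
  apply Subgroup.list_prod_mem
  simpa using h

/-- An autostackable structure on `G` respecting the subgroup `K`, with all the data bundled:
the alphabet `A`, the stacking data `st`, the letters `B` generating `K`, the normal forms `NH`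
of `K`, and the transversal words `NT`. -/
structure Factor (G : Type) [Group G] (K : Subgroup G) where
  A : Type
  fin : Fintype A
  π : A → G
  inv : A → A
  st : StackingData A
  stk : IsStacking G π inv st
  auto : st.IsAuto
  B : Set A
  inv_mem : ∀ b ∈ B, inv b ∈ B
  val_mem : ∀ b ∈ B, π b ∈ K
  NH : Set (List A)
  NT : Set (List A)
  NH_sub : ∀ w ∈ NH, ∀ b ∈ w, b ∈ B
  NH_prefixClosed : PrefixClosed NH
  NH_nf : ∀ h : G, h ∈ K → ∃! w, w ∈ NH ∧ wordVal π w = h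
  NT_prefixClosed : PrefixClosed NT
  NT_nf : ∀ g : G, ∃! w, w ∈ NT ∧ wordVal π w * g⁻¹ ∈ K
  N_eq : st.N = {w | ∃ u ∈ NH, ∃ v ∈ NT, w = u ++ v}
  closed : ∀ y ∈ st.N, wordVal π y ∈ K → ∀ b ∈ B, ∀ c ∈ st.phi y b, c ∈ B
  transl : ∀ a : A, ∀ y ∈ st.N, ∀ y' ∈ st.N, ¬(wordVal π y ∈ K ∧ a ∈ B) →
    (∃ h ∈ K, wordVal π y' = h * wordVal π y) → st.phi y' a = st.phi y a

theorem AutostackableRespecting.nonempty_factor {G : Type} [Group G] {K : Subgroup G}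
    (h : AutostackableRespecting G K) : Nonempty (Factor G K) := by
  obtain ⟨A, fin, π, inv, st, stk, auto, B, h1, h2, -, NH, NT, h4, h5, h6, h7, h8, h9, h10,
    h11⟩ := h
  exact ⟨⟨A, fin, π, inv, st, stk, auto, B, h1, h2, NH, NT, h4, h5, h6, h7, h8, h9, h10, h11⟩⟩

attribute [instance] Factor.fin

namespace Factor

variable {G : Type} [Group G] {K : Subgroup G} (D : Factor G K)

/-- The group element represented by a word of the factor. -/
abbrev val (w : List D.A) : G := wordVal D.π w

theorem nil_NH : [] ∈ D.NH := by
  obtain ⟨w, ⟨hw, -⟩, -⟩ := D.NH_nf 1 K.one_mem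
  exact D.NH_prefixClosed w hw _ ⟨w, rfl⟩

theorem nil_NT : [] ∈ D.NT := by
  obtain ⟨w, ⟨hw, -⟩, -⟩ := D.NT_nf 1
  exact D.NT_prefixClosed w hw _ ⟨w, rfl⟩

theorem append_mem {u t : List D.A} (hu : u ∈ D.NH) (ht : t ∈ D.NT) : u ++ t ∈ D.st.N := by
  rw [D.N_eq]; exact ⟨u, hu, t, ht, rfl⟩

theorem NH_le {u : List D.A} (hu : u ∈ D.NH) : u ∈ D.st.N := by
  simpa using D.append_mem hu D.nil_NT

theorem NT_le {t : List D.A} (ht : t ∈ D.NT) : t ∈ D.st.N := by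
  simpa using D.append_mem D.nil_NH ht

theorem exists_split {w : List D.A} (hw : w ∈ D.st.N) : ∃ u ∈ D.NH, ∃ t ∈ D.NT, w = u ++ t := by
  rw [D.N_eq] at hw; exact hw

theorem N_inj {w w' : List D.A} (hw : w ∈ D.st.N) (hw' : w' ∈ D.st.N) (h : D.val w = D.val w') :
    w = w' :=
  (D.stk.nf (D.val w)).unique ⟨hw, rfl⟩ ⟨hw', h.symm⟩

theorem word_mem {w : List D.A} (hw : ∀ a ∈ w, a ∈ D.B) : D.val w ∈ K :=
  wordVal_mem _ _ _ fun a ha => D.val_mem a (hw a ha)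

theorem NH_mem {u : List D.A} (hu : u ∈ D.NH) : D.val u ∈ K := D.word_mem (D.NH_sub u hu)

theorem NT_inj {t t' : List D.A} (ht : t ∈ D.NT) (ht' : t' ∈ D.NT)
    (h : D.val t * (D.val t')⁻¹ ∈ K) : t = t' :=
  (D.NT_nf (D.val t')).unique ⟨ht, h⟩ ⟨ht', by simp⟩

theorem NT_eq_nil {t : List D.A} (ht : t ∈ D.NT) (h : D.val t ∈ K) : t = [] :=
  D.NT_inj ht D.nil_NT (by simpa using h)

/-- If a letter extends the normal form `u ++ t` to a normal form, it extends the transversal word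
`t` to a transversal word, unless `t` is empty and the letter belongs to the subgroup. -/
theorem snoc_mem_NT {u t : List D.A} {a : D.A} (hu : u ∈ D.NH) (ht : t ∈ D.NT)
    (h : u ++ t ++ [a] ∈ D.st.N) (hn : ¬(t = [] ∧ a ∈ D.B)) : t ++ [a] ∈ D.NT := by
  obtain ⟨u', hu', t', ht', he⟩ := D.exists_split h
  rcases List.eq_nil_or_concat' t' with rfl | ⟨t'', a', rfl⟩
  · exfalso
    rw [List.append_nil] at he
    subst he
    refine hn ⟨D.NT_eq_nil ht ?_, D.NH_sub _ hu' a (by simp)⟩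
    have h1 : u ++ t ∈ D.NH := D.NH_prefixClosed _ hu' _ (List.prefix_append _ _)
    have h2 := D.NH_mem h1
    rw [val, wordVal_append] at h2
    exact (K.mul_mem_cancel_left (D.NH_mem hu)).1 h2
  · rw [← List.append_assoc] at he
    obtain ⟨he1, he2⟩ := List.append_inj' he rfl
    obtain rfl : a = a' := by simpa using he2
    have ht'' : t'' ∈ D.NT := D.NT_prefixClosed _ ht' _ (List.prefix_append _ _)
    obtain rfl : t = t'' := by
      apply D.NT_inj ht ht''
      have hv : D.val u * D.val t = D.val u' * D.val t'' := by
        rw [← wordVal_append, he1, wordVal_append]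
      have : D.val t * (D.val t'')⁻¹ = (D.val u)⁻¹ * D.val u' := by
        rw [eq_inv_mul_iff_mul_eq, ← mul_assoc, hv, mul_inv_cancel_right]
      rw [this]
      exact K.mul_mem (K.inv_mem (D.NH_mem hu)) (D.NH_mem hu')
    exact ht'

end Factor

/-! ### Words over the disjoint union of the alphabets -/

section Words

variable {ι : Type} {A : ι → Type}

/-- A word over the alphabet of the factor `i`, read over the disjoint union. -/
def emb (i : ι) (x : List (A i)) : List (Σ i, A i) := x.map (Sigma.mk i)

/-- The index of the last letter of a word, with the value `i₀` at the empty word. -/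
def lastIdx (i₀ : ι) (w : List (Σ i, A i)) : ι := (w.getLast?.map Sigma.fst).getD i₀

/-- All letters of the word belong to the factor `i₀`. -/
def OfIdx (i₀ : ι) (w : List (Σ i, A i)) : Prop := ∀ c ∈ w, c.1 = i₀

@[simp] theorem emb_nil (i : ι) : emb i ([] : List (A i)) = [] := rfl

@[simp] theorem emb_append (i : ι) (x y : List (A i)) : emb i (x ++ y) = emb i x ++ emb i y := by
  simp [emb]

@[simp] theorem emb_singleton (i : ι) (a : A i) : emb i [a] = [⟨i, a⟩] := rfl

theorem emb_injective (i : ι) : Function.Injective (emb (A := A) i) :=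
  List.map_injective_iff.2 sigma_mk_injective

/-- A splitting of an embedded word at a letter comes from a splitting of the word. -/
theorem emb_split {i : ι} {x : List (A i)} {U U' : List (Σ i, A i)} {c : Σ i, A i}
    (h : emb i x = U ++ c :: U') :
    ∃ u a u', x = u ++ a :: u' ∧ U = emb i u ∧ c = ⟨i, a⟩ := by
  obtain ⟨u, v, rfl, rfl, hv⟩ := List.map_eq_append_iff.1 h
  obtain ⟨a, u', rfl, rfl, -⟩ := List.map_eq_cons_iff.1 hv
  exact ⟨u, a, u', rfl, rfl, rfl⟩

@[simp] theorem lastIdx_nil (i₀ : ι) : lastIdx i₀ ([] : List (Σ i, A i)) = i₀ := rfl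

@[simp] theorem lastIdx_snoc (i₀ : ι) (w : List (Σ i, A i)) (c : Σ i, A i) :
    lastIdx i₀ (w ++ [c]) = c.1 := by
  simp [lastIdx]

theorem lastIdx_append_emb (i₀ i : ι) (w : List (Σ i, A i)) {x : List (A i)} (hx : x ≠ []) :
    lastIdx i₀ (w ++ emb i x) = i := by
  rcases List.eq_nil_or_concat' x with rfl | ⟨x, a, rfl⟩
  · exact absurd rfl hx
  · rw [emb_append, ← List.append_assoc]; exact lastIdx_snoc _ _ _

theorem lastIdx_emb (i₀ : ι) (x : List (A i₀)) : lastIdx i₀ (emb i₀ x) = i₀ := by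
  rcases eq_or_ne x [] with rfl | hx
  · rfl
  · simpa using lastIdx_append_emb i₀ i₀ [] hx

theorem OfIdx.lastIdx_eq {i₀ : ι} {w : List (Σ i, A i)} (h : OfIdx i₀ w) : lastIdx i₀ w = i₀ := by
  rcases List.eq_nil_or_concat' w with rfl | ⟨w, c, rfl⟩
  · rfl
  · rw [lastIdx_snoc]; exact h c (by simp)

theorem ofIdx_emb (i : ι) (x : List (A i)) : OfIdx i (emb i x) := by
  intro c hc
  obtain ⟨a, -, rfl⟩ := List.mem_map.1 hc
  rfl

theorem ofIdx_append {i : ι} {v w : List (Σ i, A i)} : OfIdx i (v ++ w) ↔ OfIdx i v ∧ OfIdx i w := by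
  simp [OfIdx, or_imp, forall_and]

theorem ofIdx_append_emb {i j : ι} {v : List (Σ i, A i)} {x : List (A j)} (hx : x ≠ []) :
    OfIdx i (v ++ emb j x) ↔ OfIdx i v ∧ j = i := by
  rw [ofIdx_append]
  refine and_congr_right fun _ => ⟨fun h => ?_, ?_⟩
  · obtain ⟨a, ha⟩ := List.exists_mem_of_ne_nil x hx
    exact h ⟨j, a⟩ (List.mem_map_of_mem ha)
  · rintro rfl; exact ofIdx_emb _ _

variable [DecidableEq ι]

/-- The longest suffix of a word all of whose letters belong to the factor `i`. -/
def ls (i : ι) (w : List (Σ i, A i)) : List (A i) :=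
  w.foldl (fun acc c => if h : c.1 = i then acc ++ [h ▸ c.2] else []) []

@[simp] theorem ls_nil (i : ι) : ls i ([] : List (Σ i, A i)) = [] := rfl

@[simp] theorem ls_snoc_same (i : ι) (w : List (Σ i, A i)) (a : A i) :
    ls i (w ++ [⟨i, a⟩]) = ls i w ++ [a] := by
  simp [ls]

theorem ls_snoc_ne {i : ι} (w : List (Σ i, A i)) {c : Σ i, A i} (h : c.1 ≠ i) :
    ls i (w ++ [c]) = [] := by
  simp [ls, h]

theorem ls_append_emb (i : ι) (w : List (Σ i, A i)) (x : List (A i)) :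
    ls i (w ++ emb i x) = ls i w ++ x := by
  induction x using List.reverseRecOn with
  | nil => simp
  | append_singleton x a ih => simp [← List.append_assoc, ih]

theorem ls_emb (i : ι) (x : List (A i)) : ls i (emb i x) = x := by
  simpa using ls_append_emb i [] x

theorem ls_append_emb_ne {i j : ι} (h : j ≠ i) (w : List (Σ i, A i)) {x : List (A j)}
    (hx : x ≠ []) : ls i (w ++ emb j x) = [] := by
  rcases List.eq_nil_or_concat' x with rfl | ⟨x, a, rfl⟩
  · exact absurd rfl hx
  · rw [emb_append, ← List.append_assoc]; exact ls_snoc_ne _ h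

theorem ls_emb_ne {i j : ι} (h : j ≠ i) (x : List (A j)) : ls i (emb j x) = [] := by
  rcases eq_or_ne x [] with rfl | hx
  · rfl
  · simpa using ls_append_emb_ne h [] hx

theorem ls_eq_nil_of_lastIdx {i i₀ : ι} {w : List (Σ i, A i)} (h : lastIdx i₀ w ≠ i) :
    ls i w = [] := by
  rcases List.eq_nil_or_concat' w with rfl | ⟨w, c, rfl⟩
  · rfl
  · rw [lastIdx_snoc] at h; exact ls_snoc_ne _ h

theorem OfIdx.eq_emb {i : ι} {w : List (Σ i, A i)} (h : OfIdx i w) : w = emb i (ls i w) := by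
  induction w using List.reverseRecOn with
  | nil => rfl
  | append_singleton w c ih =>
    obtain ⟨h1, h2⟩ := ofIdx_append.1 h
    obtain ⟨j, a⟩ := c
    obtain rfl : j = i := h2 ⟨j, a⟩ (by simp)
    rw [ls_snoc_same, emb_append, ← ih h1]; rfl

end Words

/-! ### Normal forms in the amalgamated product -/

set_option linter.unusedSectionVars false

section Amalgam

open Monoid

variable {ι : Type} [DecidableEq ι] {H : Type} [Group H] {G : ι → Type} [∀ i, Group (G i)]
  {φ : ∀ i, H →* G i} (F : ∀ i, Factor (G i) (φ i).range) (i₀ : ι)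

/-- The letters of the amalgamated product: the disjoint union of the alphabets of the factors. -/
abbrev Letter : Type := Σ i, (F i).A

/-- The element of the amalgamated product represented by a letter. -/
def πP (c : Letter F) : PushoutI φ := PushoutI.of c.1 ((F c.1).π c.2)

/-- The formal inverse of a letter. -/
def invP (c : Letter F) : Letter F := ⟨c.1, (F c.1).inv c.2⟩

/-- The element of the amalgamated product represented by a word. -/
abbrev pv (w : List (Letter F)) : PushoutI φ := wordVal (πP F) w

theorem pv_emb (i : ι) (x : List (F i).A) :
    pv F (emb (A := fun i => (F i).A) i x) = PushoutI.of i ((F i).val x) := by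
  induction x with
  | nil => simp
  | cons a x ih =>
    have : emb (A := fun i => (F i).A) i (a :: x) = ⟨i, a⟩ :: emb i x := rfl
    rw [this, pv, wordVal_cons]
    rw [pv] at ih
    rw [ih, Factor.val, Factor.val, wordVal_cons, map_mul]; rfl

/-- `NN F i₀ n o p`: the word `p` is a normal form of the subgroup over the alphabet of the factor
`i₀`, followed by `n` nonempty transversal words of which neighbouring ones belong to different
factors. The index of the last of them is `o`, which is `none` when `n = 0`. -/
inductive NN : ℕ → Option ι → List (Letter F) → Prop
  | base {u : List (F i₀).A} (hu : u ∈ (F i₀).NH) : NN 0 none (emb i₀ u)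
  | snoc {n : ℕ} {o : Option ι} {p : List (Letter F)} {i : ι} {t : List (F i).A}
      (hp : NN n o p) (ho : o ≠ some i) (ht : t ∈ (F i).NT) (hne : t ≠ []) :
      NN (n + 1) (some i) (p ++ emb i t)

variable {F i₀}

theorem NN.eq_emb {n : ℕ} {p : List (Letter F)} (h : NN F i₀ n none p) :
    n = 0 ∧ ∃ u ∈ (F i₀).NH, p = emb i₀ u := by
  cases h with
  | base hu => exact ⟨rfl, _, hu, rfl⟩

theorem NN.lastIdx_some {n : ℕ} {p : List (Letter F)} {j : ι} (h : NN F i₀ n (some j) p) :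
    lastIdx i₀ p = j := by
  cases h with
  | snoc hp ho ht hne => exact lastIdx_append_emb _ _ _ hne

theorem NN.lastIdx_none {n : ℕ} {p : List (Letter F)} (h : NN F i₀ n none p) :
    lastIdx i₀ p = i₀ := by
  obtain ⟨-, u, -, rfl⟩ := h.eq_emb
  exact lastIdx_emb _ _

theorem NN.ls_eq_nil {n : ℕ} {o : Option ι} {p : List (Letter F)} {i : ι} (h : NN F i₀ n o p)
    (ho : o ≠ some i) (hi : ¬(OfIdx i₀ p ∧ i = i₀)) : ls i p = [] := by
  cases h with
  | base hu => exact ls_emb_ne (fun h => hi ⟨ofIdx_emb _ _, h.symm⟩) _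
  | @snoc n o p j t hp ho' ht hne =>
    exact ls_append_emb_ne (fun h => ho (by rw [h])) _ hne

theorem NN.eq_none {n : ℕ} {o : Option ι} {p : List (Letter F)} {i : ι} (h : NN F i₀ n o p)
    (ho : o ≠ some i) (hp : OfIdx i₀ p) (hi : i = i₀) : o = none := by
  cases h with
  | base hu => rfl
  | @snoc n o p j t hp' ho' ht hne =>
    exact absurd (by rw [((ofIdx_append_emb hne).1 hp).2, hi]) ho

theorem NN.ls_mem {n : ℕ} {o : Option ι} {p : List (Letter F)} {i : ι} (h : NN F i₀ n o p)
    (ho : o ≠ some i) : ls i p ∈ (F i).NH := by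
  by_cases hi : OfIdx i₀ p ∧ i = i₀
  · obtain rfl := h.eq_none ho hi.1 hi.2
    obtain ⟨-, u, hu, rfl⟩ := h.eq_emb
    obtain ⟨-, rfl⟩ := hi
    rw [ls_emb]; exact hu
  · rw [h.ls_eq_nil ho hi]; exact (F i).nil_NH

variable (F i₀)

/-- The condition on a single prefix that detects normal forms: as long as only letters of the
factor `i₀` have occurred the word is a normal form of that factor, and afterwards each last
syllable is a transversal word. -/
def okAt (p : List (Letter F)) : Prop :=
  (OfIdx i₀ p → ls i₀ p ∈ (F i₀).st.N) ∧ (¬ OfIdx i₀ p → ∀ i, ls i p ∈ (F i).NT)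

/-- The language of normal forms of the amalgamated product. -/
def NP : Set (List (Letter F)) := {w | ∀ p, p <+: w → okAt F i₀ p}

variable {F i₀}

theorem NP_prefixClosed : PrefixClosed (NP F i₀) := fun _ hw _ hp _ hq => hw _ (hq.trans hp)

theorem NN.mem_NP {n : ℕ} {o : Option ι} {w : List (Letter F)} (h : NN F i₀ n o w) :
    w ∈ NP F i₀ := by
  induction h with
  | base hu =>
    intro p hp
    obtain ⟨u', hu', rfl⟩ := List.prefix_map_iff.1 hp
    change okAt F i₀ (emb i₀ u')
    refine ⟨fun _ => ?_, fun h => absurd (ofIdx_emb _ _) h⟩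
    rw [ls_emb]
    exact (F i₀).NH_le ((F i₀).NH_prefixClosed _ hu _ hu')
  | @snoc n o p i t hp ho ht hne ih =>
    intro q hq
    have hpq : q <+: p ∨ p <+: q := (le_total q.length p.length).imp
      (List.prefix_of_prefix_length_le hq (List.prefix_append p _))
      (List.prefix_of_prefix_length_le (List.prefix_append p _) hq)
    rcases hpq with hq' | ⟨s, rfl⟩
    · exact ih _ hq'
    · have hs := (List.prefix_append_right_inj _).1 hq
      obtain ⟨t', ht', rfl⟩ := List.prefix_map_iff.1 hs
      change okAt F i₀ (p ++ emb i t')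
      rcases eq_or_ne t' [] with rfl | hne'
      · rw [emb_nil, List.append_nil]; exact ih _ List.prefix_rfl
      have ht'' := (F i).NT_prefixClosed _ ht _ ht'
      constructor
      · intro hI
        obtain ⟨hI, rfl⟩ := (ofIdx_append_emb hne').1 hI
        rw [ls_append_emb]
        exact (F i).append_mem (hp.ls_mem ho) ht''
      · intro hI j
        by_cases hj : i = j
        · subst hj
          rw [ls_append_emb, hp.ls_eq_nil ho (fun h => hI ((ofIdx_append_emb hne').2 h))]
          exact ht''
        · rw [ls_append_emb_ne hj _ hne']; exact (F j).nil_NT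

/-- Every word of the language splits into syllables. -/
theorem exists_NN {w : List (Letter F)} (h : w ∈ NP F i₀) : ∃ n o, NN F i₀ n o w := by
  induction w using List.reverseRecOn with
  | nil => exact ⟨0, none, NN.base (F := F) (i₀ := i₀) (F i₀).nil_NH⟩
  | append_singleton w c ih =>
    by_cases hI : OfIdx i₀ (w ++ [c])
    · have hx := (h _ List.prefix_rfl).1 hI
      rw [hI.eq_emb]
      obtain ⟨u, hu, t, ht, hut⟩ := (F i₀).exists_split hx
      rw [hut]
      rcases eq_or_ne t [] with rfl | hne
      · rw [List.append_nil]; exact ⟨_, _, NN.base hu⟩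
      · rw [emb_append]; exact ⟨_, _, NN.snoc (NN.base hu) (by simp) ht hne⟩
    · have hx := (h _ List.prefix_rfl).2 hI
      obtain ⟨n, o, hw⟩ := ih (NP_prefixClosed _ h _ (List.prefix_append _ _))
      obtain ⟨i, a⟩ := c
      have hxi := hx i
      have hc : ([⟨i, a⟩] : List (Letter F)) = emb i [a] := rfl
      rw [ls_snoc_same] at hxi
      have hnI : ∀ p : List (Letter F), (∃ x, w = p ++ emb i x) → ¬(OfIdx i₀ p ∧ i = i₀) := by
        rintro p ⟨x, rfl⟩ ⟨h1, rfl⟩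
        refine hI (ofIdx_append.2 ⟨ofIdx_append.2 ⟨h1, ofIdx_emb _ _⟩, ?_⟩)
        rw [hc]; exact ofIdx_emb _ _
      by_cases ho : o = some i
      · subst ho
        cases hw with
        | @snoc n o p i t hp ho ht hne =>
          rw [ls_append_emb, hp.ls_eq_nil ho (hnI _ ⟨_, rfl⟩), List.nil_append] at hxi
          rw [hc, List.append_assoc, ← emb_append]
          exact ⟨_, _, NN.snoc hp ho hxi (by simp)⟩
      · rw [hw.ls_eq_nil ho (hnI _ ⟨[], by simp⟩), List.nil_append] at hxi
        rw [hc]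
        exact ⟨_, _, NN.snoc hw ho hxi (by simp)⟩

/-- For each factor `i`, a normal form is a normal form whose last syllable lies in a different
factor, followed by a possibly empty transversal word of the factor `i`. -/
theorem exists_decomp {y : List (Letter F)} (h : y ∈ NP F i₀) (i : ι) :
    ∃ n o p t, NN F i₀ n o p ∧ o ≠ some i ∧ t ∈ (F i).NT ∧ y = p ++ emb i t ∧
      ls i y = ls i p ++ t := by
  obtain ⟨n, o, hy⟩ := exists_NN h
  by_cases ho : o = some i
  · subst ho
    cases hy with
    | @snoc n o p i t hp ho ht hne =>
      exact ⟨n, o, p, t, hp, ho, ht, rfl, ls_append_emb _ _ _⟩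
  · exact ⟨n, o, y, [], hy, ho, (F i).nil_NT, by simp, by simp⟩

theorem NN.append_mem_NP {n : ℕ} {o : Option ι} {p : List (Letter F)} {i : ι} {t : List (F i).A}
    (hp : NN F i₀ n o p) (ho : o ≠ some i) (ht : t ∈ (F i).NT) : p ++ emb i t ∈ NP F i₀ := by
  rcases eq_or_ne t [] with rfl | hne
  · simpa using hp.mem_NP
  · exact (hp.snoc ho ht hne).mem_NP

theorem ls_mem_N {y : List (Letter F)} (h : y ∈ NP F i₀) (i : ι) : ls i y ∈ (F i).st.N := by
  obtain ⟨n, o, p, t, hp, ho, ht, -, h⟩ := exists_decomp h i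
  rw [h]; exact (F i).append_mem (hp.ls_mem ho) ht

variable (F i₀)

/-- The transversal word representing the coset of an element of a factor. -/
noncomputable def rT (i : ι) (g : G i) : List (F i).A := ((F i).NT_nf g).choose

/-- The normal form in a factor of an element of the subgroup. -/
noncomputable def nfH (i : ι) (h : H) : List (F i).A := ((F i).NH_nf (φ i h) ⟨h, rfl⟩).choose

variable {F i₀}

theorem rT_val {i : ι} {t : List (F i).A} (ht : t ∈ (F i).NT) : rT F i ((F i).val t) = t :=
  ((F i).NT_nf _).unique ((F i).NT_nf _).choose_spec.1 ⟨ht, by simp⟩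

theorem nfH_mem (i : ι) (h : H) : nfH F i h ∈ (F i).NH :=
  ((F i).NH_nf (φ i h) ⟨h, rfl⟩).choose_spec.1.1

theorem val_nfH (i : ι) (h : H) : (F i).val (nfH F i h) = φ i h :=
  ((F i).NH_nf (φ i h) ⟨h, rfl⟩).choose_spec.1.2

theorem nfH_eq {i : ι} {h : H} {u : List (F i).A} (hu : u ∈ (F i).NH)
    (hv : (F i).val u = φ i h) : nfH F i h = u :=
  ((F i).NH_nf (φ i h) ⟨h, rfl⟩).unique ⟨nfH_mem i h, val_nfH i h⟩ ⟨hu, hv⟩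

variable (F i₀)

/-- The word attached to an element of the subgroup and a list of transversal elements. -/
noncomputable def dec (k : H) (l : List (Σ i, G i)) : List (Letter F) :=
  emb i₀ (nfH F i₀ k) ++
    (l.map fun c => emb (A := fun i => (F i).A) c.1 (rT F c.1 c.2)).flatten

/-- The condition that a list of elements of the factors consists of nontrivial elements of the
transversals, neighbouring ones lying in different factors. -/
def GoodList (l : List (Σ i, G i)) : Prop :=
  (∀ c ∈ l, c.2 ≠ 1 ∧ ∃ t ∈ (F c.1).NT, (F c.1).val t = c.2) ∧
    l.IsChain fun c c' => c.1 ≠ c'.1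

variable {F i₀}

theorem dec_snoc (k : H) (l : List (Σ i, G i)) {i : ι} {t : List (F i).A} (ht : t ∈ (F i).NT) :
    dec F i₀ k (l ++ [⟨i, (F i).val t⟩]) = dec F i₀ k l ++ emb i t := by
  simp [dec, rT_val ht]

theorem goodList_snoc {l : List (Σ i, G i)} {i : ι} {g : G i} :
    GoodList F (l ++ [⟨i, g⟩]) ↔ GoodList F l ∧ (g ≠ 1 ∧ ∃ t ∈ (F i).NT, (F i).val t = g) ∧
      l.getLast?.map Sigma.fst ≠ some i := by
  rw [GoodList, GoodList, List.isChain_append]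
  constructor
  · rintro ⟨h1, h2, -, h3⟩
    refine ⟨⟨fun c hc => h1 c (by simp [hc]), h2⟩, h1 ⟨i, g⟩ (by simp), ?_⟩
    intro h
    obtain ⟨c, hc, rfl⟩ := Option.map_eq_some_iff.1 h
    exact h3 c hc ⟨c.1, g⟩ (by simp) rfl
  · rintro ⟨⟨h1, h2⟩, h3, h4⟩
    refine ⟨?_, h2, by simp, ?_⟩
    · intro c hc
      rcases List.mem_append.1 hc with hc | hc
      · exact h1 c hc
      · obtain rfl := List.mem_singleton.1 hc
        exact h3
    · intro c hc c' hc' he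
      obtain rfl : ⟨i, g⟩ = c' := by simpa using hc'
      exact h4 (by rw [Option.mem_def.1 hc]; simp [he])

theorem NN.exists_list {n : ℕ} {o : Option ι} {p : List (Letter F)} (h : NN F i₀ n o p) :
    ∃ k l, GoodList F l ∧ l.getLast?.map Sigma.fst = o ∧ dec F i₀ k l = p := by
  induction h with
  | @base u hu =>
    obtain ⟨k, hk⟩ := (F i₀).NH_mem hu
    refine ⟨k, [], ⟨by simp, by simp⟩, rfl, ?_⟩
    simp [dec, nfH_eq hu hk.symm]
  | @snoc n o p i t hp ho ht hne ih =>
    obtain ⟨k, l, h1, rfl, rfl⟩ := ih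
    refine ⟨k, l ++ [⟨i, (F i).val t⟩], goodList_snoc.2 ⟨h1, ⟨fun h => hne ?_, t, ht, rfl⟩, ho⟩,
      by simp, dec_snoc k l ht⟩
    exact (F i).NT_eq_nil ht (by rw [h]; exact one_mem _)

theorem GoodList.nn {l : List (Σ i, G i)} (h : GoodList F l) (k : H) :
    ∃ n, NN F i₀ n (l.getLast?.map Sigma.fst) (dec F i₀ k l) ∧
      pv F (dec F i₀ k l) =
        PushoutI.base φ k * PushoutI.ofCoprodI (l.map fun c => CoprodI.of c.2).prod := by
  induction l using List.reverseRecOn with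
  | nil =>
    have : dec F i₀ k [] = emb i₀ (nfH F i₀ k) := by simp [dec]
    rw [this, pv_emb, val_nfH]
    exact ⟨0, NN.base (nfH_mem _ _), by simp [PushoutI.of_apply_eq_base]⟩
  | append_singleton l c ih =>
    obtain ⟨i, g⟩ := c
    obtain ⟨h1, ⟨hg, t, ht, rfl⟩, ho⟩ := goodList_snoc.1 h
    obtain ⟨n, hn, hv⟩ := ih h1
    rw [dec_snoc k l ht]
    refine ⟨n + 1, ?_, ?_⟩
    · simpa using hn.snoc ho ht (by rintro rfl; simp at hg)
    · rw [pv, wordVal_append, ← pv, ← pv, hv, pv_emb]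
      simp [mul_assoc]

variable (F)

/-- The transversal of the amalgam formed by the transversal words of the factors. -/
def transversal (hφ : ∀ i, Function.Injective (φ i)) : PushoutI.NormalWord.Transversal φ where
  injective := hφ
  set i := {g | ∃ t ∈ (F i).NT, (F i).val t = g}
  one_mem i := ⟨[], (F i).nil_NT, rfl⟩
  compl i := by
    rw [Subgroup.isComplement_iff_existsUnique_mul_inv_mem]
    intro g
    obtain ⟨t, ⟨ht, h⟩, hu⟩ := (F i).NT_nf g
    refine ⟨⟨(F i).val t, t, ht, rfl⟩, ?_, ?_⟩
    · have := inv_mem h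
      simpa using this
    · rintro ⟨_, t', ht', rfl⟩ h'
      have := inv_mem (S := Subgroup (G i)) h'
      obtain rfl := hu t' ⟨ht', by simpa using this⟩
      rfl

variable {F}

/-- Every element of the amalgamated product has exactly one normal form. -/
theorem NP_nf (hφ : ∀ i, Function.Injective (φ i)) (g : PushoutI φ) :
    ∃! w, w ∈ NP F i₀ ∧ pv F w = g := by
  classical
  let d := transversal F hφ
  have key : ∀ l : List (Σ i, G i), GoodList F l → ∀ k, ∃ W : PushoutI.NormalWord d,
      W.head = k ∧ W.toList = l := fun l hl k =>
    ⟨⟨⟨l, fun c hc => (hl.1 c hc).1, hl.2⟩, k, fun i g hg => (hl.1 _ hg).2⟩, rfl, rfl⟩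
  have good : ∀ W : PushoutI.NormalWord d, GoodList F W.toList := fun W =>
    ⟨fun c hc => ⟨W.ne_one c hc, W.normalized c.1 c.2 hc⟩, W.chain_ne⟩
  have hpv : ∀ W : PushoutI.NormalWord d, pv F (dec F i₀ W.head W.toList) = W.prod := fun W =>
    ((good W).nn W.head).choose_spec.2
  refine existsUnique_of_exists_of_unique ?_ ?_
  · obtain ⟨W, rfl⟩ := PushoutI.NormalWord.equiv.symm.surjective (g : PushoutI φ) (β := PushoutI φ)
      (α := PushoutI.NormalWord d)
    exact ⟨_, ((good W).nn W.head).choose_spec.1.mem_NP, hpv W⟩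
  · rintro w w' ⟨hw, hv⟩ ⟨hw', hv'⟩
    obtain ⟨n, o, hw⟩ := exists_NN hw
    obtain ⟨n', o', hw'⟩ := exists_NN hw'
    obtain ⟨k, l, hl, -, rfl⟩ := hw.exists_list
    obtain ⟨k', l', hl', -, rfl⟩ := hw'.exists_list
    obtain ⟨W, rfl, rfl⟩ := key l hl k
    obtain ⟨W', rfl, rfl⟩ := key l' hl' k'
    rw [hpv] at hv hv'
    rw [PushoutI.NormalWord.prod_injective (hv.trans hv'.symm)]

end Amalgam

/-! ### Regularity of the normal forms -/

section Regular

/-- A normal form of a factor is a transversal word exactly when it does not start with a letter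
of the subgroup. -/
theorem Factor.mem_NT_iff {G : Type} [Group G] {K : Subgroup G} (D : Factor G K) (t : List D.A) :
    t ∈ D.NT ↔ t ∈ D.st.N ∧ ∀ b, t.head? = some b → b ∉ D.B := by
  constructor
  · refine fun ht => ⟨D.NT_le ht, fun b hb hB => ?_⟩
    obtain ⟨t', rfl⟩ := List.head?_eq_some_iff.1 hb
    have h := D.NT_eq_nil (D.NT_prefixClosed _ ht [b] (by simp)) (by simpa using D.val_mem b hB)
    simp at h
  · rintro ⟨hN, hB⟩
    obtain ⟨u, hu, t, ht, rfl⟩ := D.exists_split hN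
    cases u with
    | nil => exact ht
    | cons b u => exact absurd (D.NH_sub _ hu b (by simp)) (hB b rfl)

theorem Factor.reg_NT {G : Type} [Group G] {K : Subgroup G} (D : Factor G K) :
    IsRegularLang D.NT := by
  have h := reg_of_kernel (fun t : List D.A => t.head?)
    (fun w w' a hw => by simp only [List.head?_append, hw]) {x | ∀ b, x = some b → b ∉ D.B}
  have := IsRegularLang.inter D.auto.1 h
  convert this using 1
  ext t
  exact D.mem_NT_iff t

variable {ι : Type} [DecidableEq ι] {A : ι → Type}

theorem reg_lastIdx [Finite ι] (i₀ : ι) (S : Set ι) :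
    IsRegularLang {y : List (Σ i, A i) | lastIdx i₀ y ∈ S} :=
  reg_of_kernel (lastIdx i₀) (fun w w' c _ => by rw [lastIdx_snoc, lastIdx_snoc]) S

theorem ls_kernel {i : ι} {σ : Type} {f : List (A i) → σ}
    (hf : ∀ w w' a, f w = f w' → f (w ++ [a]) = f (w' ++ [a])) (w w' : List (Σ i, A i))
    (c : Σ i, A i) (h : f (ls i w) = f (ls i w')) :
    f (ls i (w ++ [c])) = f (ls i (w' ++ [c])) := by
  obtain ⟨j, a⟩ := c
  by_cases hj : j = i
  · subst hj
    rw [ls_snoc_same, ls_snoc_same]; exact hf _ _ _ h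
  · rw [ls_snoc_ne _ hj, ls_snoc_ne _ hj]

theorem reg_ls {i : ι} {L : Set (List (A i))} (h : IsRegularLang L) :
    IsRegularLang {y : List (Σ i, A i) | ls i y ∈ L} := by
  obtain ⟨σ, hσ, f, S, hf, hS⟩ := h.exists_kernel
  have := reg_of_kernel (fun y : List (Σ i, A i) => f (ls i y)) (ls_kernel hf) S
  convert this using 1
  ext y
  exact hS _

variable {H : Type} [Group H] {G : ι → Type} [∀ i, Group (G i)]
  {φ : ∀ i, H →* G i} (F : ∀ i, Factor (G i) (φ i).range) (i₀ : ι)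

theorem snoc_mem_NP (w : List (Letter F)) (c : Letter F) :
    w ++ [c] ∈ NP F i₀ ↔ w ∈ NP F i₀ ∧ okAt F i₀ (w ++ [c]) := by
  constructor
  · exact fun h => ⟨NP_prefixClosed _ h _ (List.prefix_append _ _), h _ List.prefix_rfl⟩
  · rintro ⟨h, h'⟩ p hp
    rcases List.prefix_concat_iff.1 hp with rfl | hp
    · exact h'
    · exact h p hp

theorem reg_NP [Finite ι] : IsRegularLang (NP F i₀) := by
  obtain ⟨σ, hσ, f, S, hf, hS⟩ := (F i₀).auto.1.exists_kernel
  choose τ hτ g T hg hT using fun i => (F i).reg_NT.exists_kernel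
  have hok : ∀ p, okAt F i₀ p ↔
      (OfIdx i₀ p → f (ls i₀ p) ∈ S) ∧ (¬ OfIdx i₀ p → ∀ i, g i (ls i p) ∈ T i) := fun p =>
    and_congr (imp_congr_right fun _ => hS _) (imp_congr_right fun _ => forall_congr' fun i => hT i _)
  -- The automaton remembers the states reached by the last syllable in all automata at once.
  have := reg_of_kernel (fun w : List (Letter F) =>
      (w ∈ NP F i₀, OfIdx i₀ w, f (ls i₀ w), fun i => g i (ls i w))) (by
    intro w w' c h
    simp only [Prod.mk.injEq] at h ⊢
    obtain ⟨h1, h2, h3, h4⟩ := h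
    have k2 : OfIdx i₀ (w ++ [c]) = OfIdx i₀ (w' ++ [c]) := by
      rw [ofIdx_append, ofIdx_append, h2]
    have k3 := ls_kernel (hf) w w' c h3
    have k4 : (fun i => g i (ls i (w ++ [c]))) = fun i => g i (ls i (w' ++ [c])) :=
      funext fun i => ls_kernel (hg i) w w' c (congrFun h4 i)
    refine ⟨?_, k2, k3, k4⟩
    have k4' := fun i => congrFun k4 i
    rw [snoc_mem_NP, snoc_mem_NP, hok, hok, h1, k2, k3]
    simp only [k4']) {x | x.1}
  exact this

end Regular

/-! ### Termination of the stacking flow -/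

section Flow

/-- The flow relation of stacking data: `Succ π inv st e' e` says that the edge `e` of the Cayley
graph, given by a normal form and a letter, does not lie in the tree of normal forms, and that
the path given by the stacking function at `e` runs along the edge `e'`. -/
def Succ {G : Type} [Monoid G] {α : Type} (π : α → G) (inv : α → α) (st : StackingData α)
    (e' e : List α × α) : Prop :=
  e.1 ∈ st.N ∧ e.1 ++ [e.2] ∉ st.N ∧ (¬ ∃ y', e.1 = y' ++ [inv e.2]) ∧
    ∃ u u' : List α, st.phi e.1 e.2 = u ++ e'.2 :: u' ∧ e'.1 ∈ st.N ∧
      wordVal π e'.1 = wordVal π (e.1 ++ u)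

theorem succ_wellFounded_iff {G : Type} [Group G] {α : Type} (π : α → G) (inv : α → α)
    (st : StackingData α) : WellFounded (Succ π inv st) ↔
      ¬ ∃ seq : ℕ → List α × α,
      ∀ i : ℕ, (seq i).1 ∈ st.N ∧ (seq i).1 ++ [(seq i).2] ∉ st.N ∧
        (¬ ∃ y', (seq i).1 = y' ++ [inv (seq i).2]) ∧
        ∃ u u' : List α, st.phi (seq i).1 (seq i).2 = u ++ (seq (i+1)).2 :: u' ∧
          (seq (i+1)).1 ∈ st.N ∧
          wordVal π ((seq (i+1)).1) = wordVal π ((seq i).1 ++ u) := by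
  rw [wellFounded_iff_isEmpty_descending_chain, isEmpty_subtype, not_exists]
  rfl

end Flow

section Amalgam

open Monoid

variable {ι : Type} [DecidableEq ι] {H : Type} [Group H] {G : ι → Type} [∀ i, Group (G i)]
  {φ : ∀ i, H →* G i} (F : ∀ i, Factor (G i) (φ i).range) (i₀ : ι)

/-- An element of `H` whose image in the factor `i` is the value of the letter `a`, if there is
one. -/
noncomputable def baseOf (i : ι) (a : (F i).A) : H :=
  open Classical in if h : (F i).π a ∈ (φ i).range then h.choose else 1

/-- The word of the factor `j` that replaces a letter `a` of the subgroup in the factor `i`. -/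
noncomputable def rewr (i j : ι) (a : (F i).A) : List (F j).A := nfH F j (baseOf F i a)

/-- The stacking function of the amalgamated product. A letter of the subgroup whose factor
differs from that of the last letter of `y` (`i₀` if `y` is empty) is rewritten in the alphabet of
the latter factor; any other letter is treated by the stacking function of its own factor, applied
to the longest suffix of `y` over the alphabet of that factor. -/
noncomputable def phiP (y : List (Letter F)) (c : Letter F) : List (Letter F) :=
  open Classical in
  if c.2 ∈ (F c.1).B ∧ lastIdx i₀ y ≠ c.1 then
    emb (lastIdx i₀ y) (rewr F c.1 (lastIdx i₀ y) c.2)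
  else emb c.1 ((F c.1).st.phi (ls c.1 y) c.2)

/-- The stacking data of the amalgamated product. The bound is the maximum of the bounds of the
factors and the lengths of the words replacing letters of the subgroup. -/
noncomputable def stP [Fintype ι] : StackingData (Letter F) where
  N := NP F i₀
  K := max (Finset.univ.sup fun i => (F i).st.K)
    (Finset.univ.sup fun q : Letter F × ι => (rewr F q.1.1 q.2 q.1.2).length)
  phi := phiP F i₀

variable {F i₀}

theorem pv_append (v w : List (Letter F)) : pv F (v ++ w) = pv F v * pv F w :=
  wordVal_append _ _ _

theorem of_letter {i : ι} {a : (F i).A} (ha : a ∈ (F i).B) :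
    (F i).π a = φ i (baseOf F i a) := by
  have h := (F i).val_mem a ha
  rw [baseOf, dif_pos h, h.choose_spec]

theorem phiP_of_ne {y : List (Letter F)} {i : ι} {a : (F i).A} (ha : a ∈ (F i).B)
    (h : lastIdx i₀ y ≠ i) :
    phiP F i₀ y ⟨i, a⟩ = emb (lastIdx i₀ y) (rewr F i (lastIdx i₀ y) a) :=
  if_pos ⟨ha, h⟩

theorem phiP_of_not {y : List (Letter F)} {i : ι} {a : (F i).A}
    (h : ¬(a ∈ (F i).B ∧ lastIdx i₀ y ≠ i)) :
    phiP F i₀ y ⟨i, a⟩ = emb i ((F i).st.phi (ls i y) a) :=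
  if_neg h

theorem val_phiP {y : List (Letter F)} (hy : y ∈ NP F i₀) (c : Letter F) :
    pv F (phiP F i₀ y c) = πP F c := by
  obtain ⟨i, a⟩ := c
  by_cases h : a ∈ (F i).B ∧ lastIdx i₀ y ≠ i
  · rw [phiP_of_ne h.1 h.2, pv_emb, rewr, val_nfH, PushoutI.of_apply_eq_base, πP, of_letter h.1,
      PushoutI.of_apply_eq_base]
  · rw [phiP_of_not h, pv_emb, πP]
    exact congrArg _ ((F i).stk.F1 _ (ls_mem_N hy i) a).1

theorem length_phiP [Fintype ι] {y : List (Letter F)} (hy : y ∈ NP F i₀) (c : Letter F) :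
    (phiP F i₀ y c).length ≤ (stP F i₀).K := by
  obtain ⟨i, a⟩ := c
  by_cases h : a ∈ (F i).B ∧ lastIdx i₀ y ≠ i
  · rw [phiP_of_ne h.1 h.2, emb, List.length_map]
    exact le_max_of_le_right (Finset.le_sup (f := fun q : Letter F × ι =>
      (rewr F q.1.1 q.2 q.1.2).length) (Finset.mem_univ (⟨i, a⟩, lastIdx i₀ y)))
  · rw [phiP_of_not h, emb, List.length_map]
    exact le_max_of_le_left ((((F i).stk.F1 _ (ls_mem_N hy i) a).2).trans
      (Finset.le_sup (f := fun i => (F i).st.K) (Finset.mem_univ i)))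

/-- On the edges of the tree of normal forms the stacking function is trivial. -/
theorem phiP_trivial {y : List (Letter F)} (hy : y ∈ NP F i₀) {c : Letter F}
    (h : y ++ [c] ∈ NP F i₀ ∨ ∃ y', y = y' ++ [invP F c]) : phiP F i₀ y c = [c] := by
  obtain ⟨i, a⟩ := c
  have hc : ¬(a ∈ (F i).B ∧ lastIdx i₀ y ≠ i) := by
    rintro ⟨ha, hl⟩
    rcases h with h | ⟨y', rfl⟩
    · have hok := h _ List.prefix_rfl
      by_cases hI : OfIdx i₀ (y ++ [⟨i, a⟩])
      · obtain ⟨h1, h2⟩ := ofIdx_append.1 hI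
        exact hl (h1.lastIdx_eq.trans (h2 ⟨i, a⟩ (by simp)).symm)
      · have h1 := hok.2 hI i
        rw [ls_snoc_same, ls_eq_nil_of_lastIdx hl] at h1
        exact absurd ((F i).NT_eq_nil h1 (by simpa using (F i).val_mem a ha)) (by simp)
    · rw [lastIdx_snoc] at hl; exact hl rfl
  rw [phiP_of_not hc, (F i).stk.F2 _ (ls_mem_N hy i)]
  · rfl
  · rcases h with h | ⟨y', rfl⟩
    · left
      have := ls_mem_N h i
      rwa [ls_snoc_same] at this
    · exact Or.inr ⟨ls i y', ls_snoc_same _ _ _⟩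

variable (F i₀)

/-- The edges starting at the group element `g` and labelled `c` are in the well-founded part of
the flow. -/
def AccE [Fintype ι] (g : PushoutI φ) (c : Letter F) : Prop :=
  ∀ y ∈ NP F i₀, pv F y = g → Acc (Succ (πP F) (invP F) (stP F i₀)) (y, c)

/-- The element `g` has a normal form with `n` transversal syllables, the last one of index
`o`. -/
def HasNN (n : ℕ) (o : Option ι) (g : PushoutI φ) : Prop := ∃ p, NN F i₀ n o p ∧ pv F p = g

variable {F i₀}

theorem accE_intro [Fintype ι] {y : List (Letter F)} {c : Letter F}
    (h : y ++ [c] ∉ NP F i₀ → (¬ ∃ y', y = y' ++ [invP F c]) → ∀ U c' U',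
      phiP F i₀ y c = U ++ c' :: U' → AccE F i₀ (pv F y * pv F U) c') :
    Acc (Succ (πP F) (invP F) (stP F i₀)) (y, c) := by
  refine Acc.intro _ ?_
  rintro ⟨y', c'⟩ ⟨h1, h2, h3, U, U', h4, h5, h6⟩
  exact h h2 h3 U c' U' h4 y' h5 (h6.trans (wordVal_append _ _ _))

/-- The type of the normal form does not change under multiplication by the subgroup. -/
theorem HasNN.mul_base {n : ℕ} {o : Option ι} {g : PushoutI φ} (h : HasNN F i₀ n o g) (k : H) :
    HasNN F i₀ n o (g * PushoutI.base φ k) := by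
  obtain ⟨p, hp, rfl⟩ := h
  induction hp generalizing k with
  | @base u hu =>
    obtain ⟨k', hk'⟩ := (F i₀).NH_mem hu
    refine ⟨_, NN.base (nfH_mem i₀ (k' * k)), ?_⟩
    rw [pv_emb, pv_emb, val_nfH, map_mul, map_mul, hk', PushoutI.of_apply_eq_base]
  | @snoc n o p i t hp ho ht hne ih =>
    obtain ⟨t', ⟨ht', hk⟩, -⟩ := (F i).NT_nf ((F i).val t * φ i k)
    obtain ⟨k', hk'⟩ := (φ i).range.inv_mem hk
    have hv : (F i).val t * φ i k = φ i k' * (F i).val t' := by rw [hk']; simp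
    obtain ⟨p', hp', hpv⟩ := ih k'
    refine ⟨_, hp'.snoc ho ht' ?_, ?_⟩
    · rintro rfl
      refine hne ((F i).NT_eq_nil ht ?_)
      have : (F i).val t = φ i (k' * k⁻¹) := by
        rw [map_mul, map_inv, eq_mul_inv_iff_mul_eq, hv]; simp
      rw [this]; exact ⟨_, rfl⟩
    · rw [pv_append, pv_append, hpv, pv_emb, pv_emb,
        ← PushoutI.of_apply_eq_base φ i, ← PushoutI.of_apply_eq_base φ i, mul_assoc, mul_assoc,
        ← map_mul, ← map_mul, hv]

theorem HasNN.mul_of_mem {n : ℕ} {o : Option ι} {g : PushoutI φ} (h : HasNN F i₀ n o g) {i : ι}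
    {x : G i} (hx : x ∈ (φ i).range) : HasNN F i₀ n o (g * PushoutI.of i x) := by
  obtain ⟨k, rfl⟩ := hx
  rw [PushoutI.of_apply_eq_base]; exact h.mul_base k

theorem NP_inj (hφ : ∀ i, Function.Injective (φ i)) {w w' : List (Letter F)} (hw : w ∈ NP F i₀)
    (hw' : w' ∈ NP F i₀) (h : pv F w = pv F w') : w = w' :=
  (NP_nf hφ _).unique ⟨hw, rfl⟩ ⟨hw', h.symm⟩

/-- Termination of the flow on the edges of one translate of a factor, provided that it terminates
on the edges of the base coset labelled by letters of the subgroup: the flow follows that of the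
factor. -/
theorem accE_coset [Fintype ι] (hφ : ∀ i, Function.Injective (φ i)) {n : ℕ} {o : Option ι} {i : ι}
    (ho : o ≠ some i)
    (hB : ∀ q, HasNN F i₀ n o q → ∀ b ∈ (F i).B, AccE F i₀ q ⟨i, b⟩)
    (e : List (F i).A × (F i).A) :
    e.1 ∈ (F i).st.N → ∀ q, HasNN F i₀ n o q →
      AccE F i₀ (q * PushoutI.of i ((F i).val e.1)) ⟨i, e.2⟩ := by
  have wf := (succ_wellFounded_iff _ _ _).2 (F i).stk.F3
  induction e using wf.induction with
  | _ e ih =>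
  obtain ⟨x, a⟩ := e
  intro hx q hq
  by_cases hK : (F i).val x ∈ (φ i).range ∧ a ∈ (F i).B
  · exact hB _ (hq.mul_of_mem hK.1) a hK.2
  obtain ⟨u, hu, t, ht, rfl⟩ := (F i).exists_split hx
  have hval : (F i).val (u ++ t) = (F i).val u * (F i).val t := wordVal_append _ _ _
  intro y hy hyv
  obtain ⟨p, hp, hpv⟩ := hq.mul_of_mem ((F i).NH_mem hu)
  obtain rfl : y = p ++ emb i t := by
    refine NP_inj hφ hy (hp.append_mem_NP ho ht) ?_
    rw [hyv, pv_append, hpv, pv_emb, mul_assoc, ← map_mul, hval]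
  have hnil : t = [] → a ∉ (F i).B := by
    rintro rfl ha
    refine hK ⟨?_, ha⟩
    rw [List.append_nil]; exact (F i).NH_mem hu
  have hcond : ¬(a ∈ (F i).B ∧ lastIdx i₀ (p ++ emb i t) ≠ i) := by
    rintro ⟨ha, hl⟩
    exact hl (lastIdx_append_emb _ _ _ fun h => hnil h ha)
  refine accE_intro fun hy1 hy2 U _ U' hU => ?_
  have hls := hp.ls_mem ho
  have hphi : (F i).st.phi (ls i p ++ t) a = (F i).st.phi (u ++ t) a := by
    refine (F i).transl a _ hx _ ((F i).append_mem hls ht) hK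
      ⟨(F i).val (ls i p) * ((F i).val u)⁻¹,
        mul_mem ((F i).NH_mem hls) (inv_mem ((F i).NH_mem hu)), ?_⟩
    simp [mul_assoc]
  rw [phiP_of_not hcond, ls_append_emb, hphi] at hU
  obtain ⟨u₁, a', u₁', hu₁, rfl, rfl⟩ := emb_split hU
  obtain ⟨x', ⟨hx', hxv⟩, -⟩ := (F i).stk.nf ((F i).val (u ++ t) * (F i).val u₁)
  have hsucc : Succ (F i).π (F i).inv (F i).st (x', a') (u ++ t, a) := by
    refine ⟨hx, ?_, ?_, u₁, u₁', hu₁, hx', by rw [hxv, ← wordVal_append]⟩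
    · intro h
      have h' := (F i).snoc_mem_NT hu ht h fun h => hnil h.1 h.2
      refine hy1 ?_
      have := hp.append_mem_NP ho h'
      rwa [emb_append, ← List.append_assoc] at this
    · rintro ⟨x'', hx''⟩
      rcases List.eq_nil_or_concat' t with rfl | ⟨t', b, rfl⟩
      · refine hnil rfl ?_
        dsimp only at hx''
        rw [List.append_nil] at hx''
        have hb : (F i).inv a ∈ (F i).B := (F i).NH_sub u hu _ (by rw [hx'']; simp)
        have := (F i).inv_mem _ hb
        rwa [(F i).stk.gen.inv_invol] at this
      · refine hy2 ⟨p ++ emb i t', ?_⟩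
        dsimp only at hx''
        rw [← List.append_assoc] at hx''
        obtain ⟨-, hb⟩ := List.append_inj' hx'' rfl
        obtain rfl : b = (F i).inv a := by simpa using hb
        rw [emb_append, ← List.append_assoc]; rfl
  have := ih (x', a') hsucc hx' q hq
  rw [hyv, pv_emb, mul_assoc, ← map_mul, ← hxv]
  exact this

theorem emb_mem_NP {x : List (F i₀).A} (hx : x ∈ (F i₀).st.N) : emb i₀ x ∈ NP F i₀ := by
  obtain ⟨u, hu, t, ht, rfl⟩ := (F i₀).exists_split hx
  rw [emb_append]
  exact (NN.base hu).append_mem_NP (by simp) ht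

/-- Termination of the flow on the edges of the subgroup labelled by its letters in the factor
`i₀`: these edges stay in the subgroup. -/
theorem accE_base [Fintype ι] (hφ : ∀ i, Function.Injective (φ i))
    (e : List (F i₀).A × (F i₀).A) :
    e.1 ∈ (F i₀).NH → e.2 ∈ (F i₀).B →
      AccE F i₀ (PushoutI.of i₀ ((F i₀).val e.1)) ⟨i₀, e.2⟩ := by
  have wf := (succ_wellFounded_iff _ _ _).2 (F i₀).stk.F3
  induction e using wf.induction with
  | _ e ih =>
  obtain ⟨x, b⟩ := e
  intro hx hb y hy hyv
  have hxN := (F i₀).NH_le hx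
  obtain rfl : y = emb i₀ x := NP_inj hφ hy (emb_mem_NP hxN) (by rw [hyv, pv_emb])
  have hcond : ¬(b ∈ (F i₀).B ∧ lastIdx i₀ (emb (A := fun i => (F i).A) i₀ x) ≠ i₀) :=
    fun h => h.2 (lastIdx_emb _ _)
  refine accE_intro fun hy1 hy2 U c' U' hU => ?_
  rw [phiP_of_not hcond, ls_emb] at hU
  obtain ⟨u₁, b', u₁', hu₁, rfl, rfl⟩ := emb_split hU
  have hcl := (F i₀).closed x hxN ((F i₀).NH_mem hx) b hb
  rw [hu₁] at hcl
  have hu₁K : (F i₀).val u₁ ∈ (φ i₀).range := (F i₀).word_mem fun c hc => hcl c (by simp [hc])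
  obtain ⟨x', ⟨hx', hxv⟩, -⟩ := (F i₀).NH_nf ((F i₀).val x * (F i₀).val u₁)
    (mul_mem ((F i₀).NH_mem hx) hu₁K)
  have := ih (x', b') ⟨hxN, fun h => hy1 (by simpa using emb_mem_NP h), ?_, u₁, u₁', hu₁,
    (F i₀).NH_le hx', by rw [hxv, ← wordVal_append]⟩ hx' (hcl b' (by simp))
  · rw [pv_emb, pv_emb, ← map_mul, ← hxv]; exact this
  · rintro ⟨x'', hx''⟩
    dsimp only at hx''
    refine hy2 ⟨emb i₀ x'', ?_⟩
    rw [hx'', emb_append]; rfl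

/-- The flow along an edge labelled by a letter of the subgroup from a factor other than that of
the last syllable moves to letters of the subgroup in the latter factor. -/
theorem accE_rewr [Fintype ι] (hφ : ∀ i, Function.Injective (φ i)) {n : ℕ} {o : Option ι}
    {i j : ι} (hj : ∀ p, NN F i₀ n o p → lastIdx i₀ p = j) (hij : j ≠ i)
    (h : ∀ q, HasNN F i₀ n o q → ∀ b ∈ (F j).B, AccE F i₀ q ⟨j, b⟩) :
    ∀ q, HasNN F i₀ n o q → ∀ b ∈ (F i).B, AccE F i₀ q ⟨i, b⟩ := by
  rintro q ⟨p, hp, rfl⟩ b hb y hy hyv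
  obtain rfl := NP_inj hφ hy hp.mem_NP hyv
  refine accE_intro fun _ _ U c' U' hU => ?_
  have hl := hj _ hp
  subst hl
  rw [phiP_of_ne hb hij] at hU
  obtain ⟨u₁, b', u₁', hu₁, rfl, rfl⟩ := emb_split hU
  have hcl := (F (lastIdx i₀ y)).NH_sub _ (nfH_mem _ (baseOf F i b))
  rw [← rewr, hu₁] at hcl
  rw [pv_emb]
  refine h _ (HasNN.mul_of_mem ⟨y, hp, rfl⟩ ?_) b' (hcl b' (by simp))
  exact (F _).word_mem fun c hc => hcl c (by simp [hc])

/-- Termination of the flow on all edges labelled by letters of the subgroup, by induction on the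
number of syllables. -/
theorem accE_subgroup [Fintype ι] (hφ : ∀ i, Function.Injective (φ i)) (n : ℕ) :
    ∀ o i q, HasNN F i₀ n o q → ∀ b ∈ (F i).B, AccE F i₀ q ⟨i, b⟩ := by
  induction n with
  | zero =>
    intro o i
    rcases o with _ | j
    · have h0 : ∀ q, HasNN F i₀ 0 none q → ∀ b ∈ (F i₀).B, AccE F i₀ q ⟨i₀, b⟩ := by
        rintro q ⟨p, hp, rfl⟩ b hb
        obtain ⟨-, u, hu, rfl⟩ := hp.eq_emb
        rw [pv_emb]
        exact accE_base hφ (u, b) hu hb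
      by_cases hi : i₀ = i
      · subst hi; exact h0
      · exact accE_rewr hφ (fun p hp => hp.lastIdx_none) hi h0
    · rintro q ⟨p, hp, rfl⟩
      cases hp
  | succ n ih =>
    intro o i
    rcases o with _ | j
    · rintro q ⟨p, hp, rfl⟩
      cases hp
    · have h0 : ∀ q, HasNN F i₀ (n + 1) (some j) q → ∀ b ∈ (F j).B, AccE F i₀ q ⟨j, b⟩ := by
        rintro q ⟨p, hp, rfl⟩ b hb
        cases hp with
        | @snoc n o p j t hp ho ht hne =>
          rw [pv_append, pv_emb]
          exact accE_coset hφ ho (ih o j) (t, b) ((F j).NT_le ht) _ ⟨p, hp, rfl⟩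
      by_cases hi : j = i
      · subst hi; exact h0
      · exact accE_rewr hφ (fun p hp => hp.lastIdx_some) hi h0

theorem stP_wellFounded [Fintype ι] (hφ : ∀ i, Function.Injective (φ i)) :
    WellFounded (Succ (πP F) (invP F) (stP F i₀)) := by
  refine ⟨?_⟩
  rintro ⟨y, i, a⟩
  by_cases hy : y ∈ NP F i₀
  · obtain ⟨n, o, p, t, hp, ho, ht, rfl, -⟩ := exists_decomp hy i
    refine accE_coset hφ ho (accE_subgroup hφ n o i) (t, a) ((F i).NT_le ht) _ ⟨p, hp, rfl⟩ _ hy ?_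
    rw [pv_append, pv_emb]
  · exact Acc.intro _ fun e he => absurd he.1 hy

theorem isInvGenSet_P (hφ : ∀ i, Function.Injective (φ i)) (i₀ : ι) :
    IsInvGenSet (PushoutI φ) (πP F) (invP F) where
  ne_one c h := (F c.1).stk.gen.ne_one c.2
    (PushoutI.of_injective hφ c.1 (h.trans (map_one _).symm))
  inv_invol c := by simp [invP, (F c.1).stk.gen.inv_invol]
  val_inv c := by
    rw [πP, πP, invP, ← map_inv, ← (F c.1).stk.gen.val_inv]
  gen := by
    rw [eq_top_iff]
    rintro g -
    obtain ⟨w, ⟨-, rfl⟩, -⟩ := NP_nf (F := F) (i₀ := i₀) hφ g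
    exact wordVal_mem _ _ _ fun c _ => Subgroup.subset_closure ⟨c, rfl⟩

theorem isStacking_P [Fintype ι] (hφ : ∀ i, Function.Injective (φ i)) :
    IsStacking (PushoutI φ) (πP F) (invP F) (stP F i₀) where
  gen := isInvGenSet_P hφ i₀
  nf := NP_nf hφ
  prefixClosed := NP_prefixClosed
  F1 _ hy c := ⟨val_phiP hy c, length_phiP hy c⟩
  F2 _ hy _ h := phiP_trivial hy h
  F3 := (succ_wellFounded_iff _ _ _).1 (stP_wellFounded hφ)

theorem isAuto_P [Fintype ι] : (stP F i₀).IsAuto := by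
  refine isAuto_of_fibres (reg_NP F i₀) (fun _ hy c => length_phiP hy c) ?_
  rintro ⟨i, a⟩ v
  have h1 := (reg_NP F i₀).inter (reg_lastIdx i₀
    {j | (a ∈ (F i).B ∧ j ≠ i) ∧ emb (A := fun i => (F i).A) j (rewr F i j a) = v})
  have h2 := (reg_NP F i₀).inter (reg_lastIdx i₀ {j | ¬(a ∈ (F i).B ∧ j ≠ i)})
  have h3 : ∀ x : {x : List (F i).A // x.length ≤ v.length}, IsRegularLang
      {y : List (Letter F) | emb i x.1 = v ∧ ls i y ∈ {x' | x' ∈ (F i).st.N ∧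
        (F i).st.phi x' a = x.1}} := by
    intro x
    by_cases hx : emb i x.1 = v
    · simpa [hx] using reg_ls (A := fun i => (F i).A) ((F i).auto.fibre a x.1)
    · simpa [hx] using reg_empty (α := Letter F)
  have : Finite {x : List (F i).A // x.length ≤ v.length} := List.finite_length_le _ _
  have h4 := h1.union (h2.inter (reg_iUnion h3))
  convert h4 using 1
  ext y
  change y ∈ NP F i₀ ∧ phiP F i₀ y ⟨i, a⟩ = v ↔ (y ∈ NP F i₀ ∧
    ((a ∈ (F i).B ∧ lastIdx i₀ y ≠ i) ∧
      emb (A := fun i => (F i).A) (lastIdx i₀ y) (rewr F i (lastIdx i₀ y) a) = v)) ∨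
    ((y ∈ NP F i₀ ∧ ¬(a ∈ (F i).B ∧ lastIdx i₀ y ≠ i)) ∧ y ∈ ⋃ x, _)
  rw [Set.mem_iUnion]
  by_cases h : a ∈ (F i).B ∧ lastIdx i₀ y ≠ i
  · rw [phiP_of_ne h.1 h.2]
    simp [h]
  · rw [phiP_of_not h]
    constructor
    · rintro ⟨hy, hv⟩
      exact Or.inr ⟨⟨hy, h⟩, ⟨_, by rw [← hv, emb, List.length_map]⟩, hv, ls_mem_N hy i, rfl⟩
    · rintro (⟨-, h', -⟩ | ⟨⟨hy, -⟩, x, hx, -, hx'⟩)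
      · exact absurd h' h
      · exact ⟨hy, by rw [hx']; exact hx⟩

/-- Amalgamated products of finitely many groups that are autostackable respecting the amalgamated
subgroup are autostackable. -/
theorem autostackable_pushoutI {ι H : Type} [Fintype ι] [Nonempty ι] [Group H] {G : ι → Type}
    [∀ i, Group (G i)] {φ : ∀ i, H →* G i} (hφ : ∀ i, Function.Injective (φ i))
    (h : ∀ i, AutostackableRespecting (G i) (φ i).range) : Autostackable (PushoutI φ) := by
  classical
  have F : ∀ i, Factor (G i) (φ i).range := fun i => (h i).nonempty_factor.some
  exact ⟨Letter F, inferInstance, πP F, invP F, stP F (Classical.arbitrary ι), isStacking_P hφ,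
    isAuto_P⟩

end Amalgam

/-! ### The amalgamated product of two groups as a quotient of the free product -/

theorem wordVal_comp {G G' α : Type} [Group G] [Group G'] (e : G →* G') (π : α → G)
    (w : List α) : wordVal (fun a => e (π a)) w = e (wordVal π w) := by
  induction w with
  | nil => simp
  | cons a w ih => simp [ih]

theorem Autostackable.congr {G G' : Type} [Group G] [Group G'] (h : Autostackable G)
    (e : G ≃* G') : Autostackable G' := by
  obtain ⟨α, hα, π, inv, st, hst, hauto⟩ := h
  have hw : ∀ w, wordVal (fun a => e (π a)) w = e (wordVal π w) := wordVal_comp e.toMonoidHom π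
  refine ⟨α, hα, fun a => e (π a), inv, st, ?_, hauto⟩
  refine ⟨⟨fun a ha => hst.gen.ne_one a (by simpa using ha), hst.gen.inv_invol,
    fun a => by rw [hst.gen.val_inv, map_inv], ?_⟩, fun g => ?_, hst.prefixClosed, ?_, hst.F2, ?_⟩
  · have := congrArg (Subgroup.map e.toMonoidHom) hst.gen.gen
    rw [MonoidHom.map_closure, Subgroup.map_top_of_surjective _ e.surjective, ← Set.range_comp]
      at this
    exact this
  · simpa [hw, ← e.eq_symm_apply] using hst.nf (e.symm g)
  · simpa [hw] using hst.F1
  · simpa only [hw, e.injective.eq_iff] using hst.F3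

section TwoFactors

variable {H G₁ G₂ : Type} [Group H] [Group G₁] [Group G₂]

/-- Two groups as a family indexed by the Booleans. -/
def fam (G₁ G₂ : Type) : Bool → Type
  | true => G₁
  | false => G₂

instance (i : Bool) : Group (fam G₁ G₂ i) :=
  match i with
  | true => inferInstanceAs (Group G₁)
  | false => inferInstanceAs (Group G₂)

/-- Two homomorphisms as a family indexed by the Booleans. -/
def famHom (φ₁ : H →* G₁) (φ₂ : H →* G₂) : ∀ i, H →* fam G₁ G₂ i
  | true => φ₁
  | false => φ₂

/-- The relations identifying the two images of the amalgamated subgroup. -/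
abbrev amalgRels (φ₁ : H →* G₁) (φ₂ : H →* G₂) : Set (Monoid.Coprod G₁ G₂) :=
  {x | ∃ h : H, x = Monoid.Coprod.inl (φ₁ h) * (Monoid.Coprod.inr (φ₂ h))⁻¹}

variable (φ₁ : H →* G₁) (φ₂ : H →* G₂)

/-- The homomorphism from the first factor to the pushout. -/
def ofFst : G₁ →* Monoid.PushoutI (famHom φ₁ φ₂) := Monoid.PushoutI.of (φ := famHom φ₁ φ₂) true

/-- The homomorphism from the second factor to the pushout. -/
def ofSnd : G₂ →* Monoid.PushoutI (famHom φ₁ φ₂) := Monoid.PushoutI.of (φ := famHom φ₁ φ₂) false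

/-- The homomorphism from the first factor to the quotient of the free product. -/
def mkFst : G₁ →* Monoid.Coprod G₁ G₂ ⧸ Subgroup.normalClosure (amalgRels φ₁ φ₂) :=
  (QuotientGroup.mk' _).comp Monoid.Coprod.inl

/-- The homomorphism from the second factor to the quotient of the free product. -/
def mkSnd : G₂ →* Monoid.Coprod G₁ G₂ ⧸ Subgroup.normalClosure (amalgRels φ₁ φ₂) :=
  (QuotientGroup.mk' _).comp Monoid.Coprod.inr

/-- The homomorphisms from both factors to the quotient of the free product, as a family. -/
def mkFam : ∀ i, fam G₁ G₂ i →*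
    Monoid.Coprod G₁ G₂ ⧸ Subgroup.normalClosure (amalgRels φ₁ φ₂)
  | true => mkFst φ₁ φ₂
  | false => mkSnd φ₁ φ₂

theorem mkSnd_eq (h : H) : mkSnd φ₁ φ₂ (φ₂ h) = mkFst φ₁ φ₂ (φ₁ h) := by
  refine (QuotientGroup.eq_iff_div_mem.2 ?_).symm
  rw [div_eq_mul_inv]
  exact Subgroup.subset_normalClosure ⟨h, rfl⟩

theorem ofFst_eq (h : H) : ofFst φ₁ φ₂ (φ₁ h) = ofSnd φ₁ φ₂ (φ₂ h) :=
  (Monoid.PushoutI.of_apply_eq_base (famHom φ₁ φ₂) true h).trans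
    (Monoid.PushoutI.of_apply_eq_base (famHom φ₁ φ₂) false h).symm

/-- The homomorphism from the pushout of groups to the quotient of the free product. -/
def toAmalg : Monoid.PushoutI (famHom φ₁ φ₂) →*
    Monoid.Coprod G₁ G₂ ⧸ Subgroup.normalClosure (amalgRels φ₁ φ₂) :=
  Monoid.PushoutI.lift (mkFam φ₁ φ₂) ((mkFst φ₁ φ₂).comp φ₁) (by
    rintro (_ | _)
    · exact MonoidHom.ext (mkSnd_eq φ₁ φ₂)
    · rfl)

theorem toAmalg_fst (g : G₁) : toAmalg φ₁ φ₂ (ofFst φ₁ φ₂ g) = mkFst φ₁ φ₂ g :=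
  Monoid.PushoutI.lift_of (φ := famHom φ₁ φ₂) (mkFam φ₁ φ₂) _ _ (i := true) g

theorem toAmalg_snd (g : G₂) : toAmalg φ₁ φ₂ (ofSnd φ₁ φ₂ g) = mkSnd φ₁ φ₂ g :=
  Monoid.PushoutI.lift_of (φ := famHom φ₁ φ₂) (mkFam φ₁ φ₂) _ _ (i := false) g

/-- The homomorphism from the quotient of the free product to the pushout of groups. -/
def ofAmalg : Monoid.Coprod G₁ G₂ ⧸ Subgroup.normalClosure (amalgRels φ₁ φ₂) →*
      Monoid.PushoutI (famHom φ₁ φ₂) :=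
  QuotientGroup.lift _ (Monoid.Coprod.lift (ofFst φ₁ φ₂) (ofSnd φ₁ φ₂)) (by
    refine Subgroup.normalClosure_le_normal (N := MonoidHom.ker _) ?_
    rintro _ ⟨h, rfl⟩
    refine (MonoidHom.mem_ker).2 ?_
    rw [map_mul, map_inv, Monoid.Coprod.lift_apply_inl, Monoid.Coprod.lift_apply_inr,
      mul_inv_eq_one, ofFst_eq])

theorem ofAmalg_fst (g : G₁) : ofAmalg φ₁ φ₂ (mkFst φ₁ φ₂ g) = ofFst φ₁ φ₂ g :=
  Monoid.Coprod.lift_apply_inl (ofFst φ₁ φ₂) (ofSnd φ₁ φ₂) g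

theorem ofAmalg_snd (g : G₂) : ofAmalg φ₁ φ₂ (mkSnd φ₁ φ₂ g) = ofSnd φ₁ φ₂ g :=
  Monoid.Coprod.lift_apply_inr (ofFst φ₁ φ₂) (ofSnd φ₁ φ₂) g

/-- The two constructions of the amalgamated product agree. -/
def amalgEquiv : Monoid.PushoutI (famHom φ₁ φ₂) ≃*
    Monoid.Coprod G₁ G₂ ⧸ Subgroup.normalClosure (amalgRels φ₁ φ₂) :=
  MonoidHom.toMulEquiv (toAmalg φ₁ φ₂) (ofAmalg φ₁ φ₂)
    (by
      refine Monoid.PushoutI.hom_ext_nonempty ?_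
      rintro (_ | _)
      · refine MonoidHom.ext fun g : G₂ => ?_
        exact (congrArg _ (toAmalg_snd φ₁ φ₂ g)).trans (ofAmalg_snd φ₁ φ₂ g)
      · refine MonoidHom.ext fun g : G₁ => ?_
        exact (congrArg _ (toAmalg_fst φ₁ φ₂ g)).trans (ofAmalg_fst φ₁ φ₂ g))
    (by
      refine QuotientGroup.monoidHom_ext _ (Monoid.Coprod.hom_ext ?_ ?_)
      · refine MonoidHom.ext fun g => ?_
        exact (congrArg _ (ofAmalg_fst φ₁ φ₂ g)).trans (toAmalg_fst φ₁ φ₂ g)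
      · refine MonoidHom.ext fun g => ?_
        exact (congrArg _ (ofAmalg_snd φ₁ φ₂ g)).trans (toAmalg_snd φ₁ φ₂ g))

end TwoFactors

/-- **Theorem (amalgamated products).** Let `H, G₁, G₂` be groups with `H` finitely
generated, and let `φ₁ : H → G₁`, `φ₂ : H → G₂` be injective homomorphisms.  If `G₁`
is autostackable respecting `φ₁(H)` and `G₂` is autostackable respecting `φ₂(H)`, then
the amalgamated free product `G₁ ∗_H G₂` (the pushout of `φ₁` and `φ₂`) is
autostackable. -/
theorem amalgamated_product_autostackable
    {H G₁ G₂ : Type} [Group H] [Group G₁] [Group G₂]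
    (hHfg : Group.FG H)
    (φ₁ : H →* G₁) (φ₂ : H →* G₂)
    (hφ₁ : Function.Injective φ₁) (hφ₂ : Function.Injective φ₂)
    (h₁ : AutostackableRespecting G₁ φ₁.range)
    (h₂ : AutostackableRespecting G₂ φ₂.range) :
    Autostackable ((Monoid.Coprod G₁ G₂) ⧸ Subgroup.normalClosure
      {x : Monoid.Coprod G₁ G₂ |
        ∃ h : H, x = Monoid.Coprod.inl (φ₁ h) * (Monoid.Coprod.inr (φ₂ h))⁻¹}) := by
  have h : Autostackable (Monoid.PushoutI (famHom φ₁ φ₂)) :=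
    autostackable_pushoutI
      (fun i => match i with
        | true => hφ₁
        | false => hφ₂)
      (fun i => match i with
        | true => h₁
        | false => h₂)
  exact h.congr (amalgEquiv φ₁ φ₂)
end

section
/- Let G be a group, let A and B be finitely generated subgroups of G, and let φ : A ≅ B be a group isomorphism. If G is autostackable respecting A and G is autostackable respecting B, then the HNN extension G∗_φ = ⟨G, t ∣ t a t⁻¹ = φ(a) for all a ∈ A⟩ is autostackable. -/
namespace HNNAuto

/-! ### Regularity of stacking functions as finite right congruences -/

/-- A map `c` on words whose fibres form a right congruence that saturates the language `N` and
on whose classes inside `N` the function `f` is constant.  With values in a finite type, such a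
`c` plays the role of a finite automaton reading `N` and computing `f`. -/
structure IsCong {α : Type} (N : Set (List α)) (f : List α → α → List α) {F : Type}
    (c : List α → F) : Prop where
  snoc : ∀ v v' a, c v = c v' → c (v ++ [a]) = c (v' ++ [a])
  mem : ∀ v v', c v = c v' → v ∈ N → v' ∈ N
  eq : ∀ v v', v ∈ N → v' ∈ N → c v = c v' → ∀ a, f v a = f v' a

section Pad

variable {α : Type}

theorem length_padWord3 (p : List α × List α × List α) :
    (padWord3 p).length = max p.1.length (max p.2.1.length p.2.2.length) := by
  simp [padWord3]

theorem getElem?_padWord3 (p : List α × List α × List α) (i : ℕ) :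
    (padWord3 p)[i]? = if i < max p.1.length (max p.2.1.length p.2.2.length) then
      some (p.1[i]?, p.2.1[i]?, p.2.2[i]?) else none := by
  unfold padWord3
  rw [List.getElem?_map]
  split_ifs with h
  · rw [List.getElem?_range h]; rfl
  · rw [List.getElem?_eq_none (by simpa using h)]; rfl

theorem padWord3_injective : Function.Injective (padWord3 (α := α)) := by
  intro p q h
  have key : ∀ r : List α × List α × List α, ∀ i : ℕ,
      r.1[i]? = ((padWord3 r)[i]?).bind (fun x => x.1) ∧
      r.2.1[i]? = ((padWord3 r)[i]?).bind (fun x => x.2.1) ∧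
      r.2.2[i]? = ((padWord3 r)[i]?).bind (fun x => x.2.2) := by
    intro r i
    rw [getElem?_padWord3]
    split_ifs with hi
    · simp
    · simp only [lt_max_iff, not_or, not_lt] at hi
      simp [hi.1, hi.2.1, hi.2.2]
  refine Prod.ext ?_ (Prod.ext ?_ ?_) <;> apply List.ext_getElem? <;> intro i
  · rw [(key p i).1, (key q i).1, h]
  · rw [(key p i).2.1, (key q i).2.1, h]
  · rw [(key p i).2.2, (key q i).2.2, h]

theorem padWord3_snoc (u w : List α) (a z : α) (h1 : 1 ≤ u.length) (hw : w.length ≤ u.length) :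
    padWord3 (u ++ [z], [a], w) = padWord3 (u, [a], w) ++ [(some z, none, none)] := by
  have e1 : max (u ++ [z]).length (max [a].length w.length) = u.length + 1 := by
    simp; omega
  have e2 : max u.length (max [a].length w.length) = u.length := by
    simp; omega
  unfold padWord3
  simp only [e1, e2, List.range_succ, List.map_append, List.map_cons, List.map_nil]
  congr 1
  · apply List.map_congr_left
    intro i hi
    rw [List.getElem?_append_left (by simpa using hi)]
  · have : u ≠ [] := List.length_pos_iff.1 h1
    simp [this, hw]

/-- Past the end of the second and third components, the first component is read alone. -/
theorem padWord3_append (u w v : List α) (a : α) (h1 : 1 ≤ u.length)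
    (hw : w.length ≤ u.length) :
    padWord3 (u ++ v, [a], w) = padWord3 (u, [a], w) ++ v.map (fun z => (some z, none, none)) := by
  induction v using List.reverseRecOn with
  | nil => simp
  | append_singleton v z ih =>
    rw [← List.append_assoc, padWord3_snoc _ _ _ _ (by simp; omega) (by simp; omega), ih]
    simp

end Pad

/-- A map constant on the fibres of a map to a finite type has finite range. -/
theorem finite_range_of_factors {S F T : Type} [Finite F] (c : S → F) (g : S → T)
    (h : ∀ x y, c x = c y → g x = g y) : (Set.range g).Finite := by
  have : Set.range g ⊆ Set.range (fun z : Set.range c => g z.2.choose) := by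
    rintro _ ⟨x, rfl⟩
    refine ⟨⟨c x, x, rfl⟩, ?_⟩
    exact h _ _ (Exists.choose_spec (p := fun y => c y = c x) ⟨x, rfl⟩)
  exact (Set.finite_range _).subset this

theorem IsCong.append {α F : Type} {N : Set (List α)} {f : List α → α → List α}
    {c : List α → F} (hc : IsCong N f c) {u u' : List α} (h : c u = c u') (v : List α) :
    c (u ++ v) = c (u' ++ v) := by
  induction v using List.reverseRecOn with
  | nil => simpa using h
  | append_singleton v z ih =>
    rw [← List.append_assoc, ← List.append_assoc]
    exact hc.snoc _ _ _ ih

theorem isRegularLang_of_isCong {α F : Type} [Finite F] {N : Set (List α)}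
    {f : List α → α → List α} {c : List α → F} (hc : IsCong N f c) : IsRegularLang N := by
  refine Language.IsRegular.of_finite_range_leftQuotient (L := N)
    (finite_range_of_factors c _ ?_)
  intro x y hxy
  ext v
  exact ⟨hc.mem _ _ (hc.append hxy v), hc.mem _ _ (hc.append hxy.symm v)⟩

instance finite_length_le_subtype (α : Type) [Finite α] (K : ℕ) :
    Finite {w : List α // w.length ≤ K} :=
  (List.finite_length_le α K).to_subtype

instance finite_length_lt_subtype (α : Type) [Finite α] (K : ℕ) :
    Finite {w : List α // w.length < K} :=
  (List.finite_length_lt α K).to_subtype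

/-- By Myhill–Nerode, a finite congruence makes the graph of a function of bounded length
synchronously regular: beyond the bound, a left quotient is determined by the class of the first
component together with the (bounded) second and third components. -/
theorem isAuto_of_isCong {α F : Type} [Finite α] [Finite F] {st : StackingData α}
    {c : List α → F} (hc : IsCong st.N st.phi c)
    (hK : ∀ y ∈ st.N, ∀ a, (st.phi y a).length ≤ st.K) : st.IsAuto := by
  refine ⟨isRegularLang_of_isCong hc, ?_⟩
  set P : Language (Option α × Option α × Option α) :=
    padWord3 '' {t | ∃ y ∈ st.N, ∃ a : α, t = (y, [a], st.phi y a)} with hP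
  refine Language.IsRegular.of_finite_range_leftQuotient (L := P) ?_
  let Q : F × α × {w : List α // w.length ≤ st.K} → Language (Option α × Option α × Option α) :=
    fun q => {r | ∃ v : List α, r = v.map (fun z => (some z, none, none)) ∧
      ∃ u, c u = q.1 ∧ u ++ v ∈ st.N ∧ st.phi (u ++ v) q.2.1 = q.2.2.1}
  have hfin : (P.leftQuotient '' {s | s.length < st.K + 1} ∪ Set.range Q ∪
      {(∅ : Set _), ({[]} : Set _)}).Finite :=
    (((List.finite_length_lt _ _).image _).union (Set.finite_range Q)).union
      ((Set.finite_singleton _).insert _)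
  refine hfin.subset ?_
  rintro _ ⟨s, rfl⟩
  by_cases hs : s.length < st.K + 1
  · exact Or.inl (Or.inl ⟨s, hs, rfl⟩)
  push Not at hs
  have short : ∀ r y a, y.length < s.length → y ∈ st.N →
      padWord3 (y, [a], st.phi y a) = s ++ r → r = [] := by
    intro r y a hy hyN h
    have hl := congrArg List.length h
    rw [length_padWord3] at hl
    have := hK y hyN a
    simp only [List.length_append, List.length_singleton] at hl
    have : r.length = 0 := by omega
    exact List.eq_nil_of_length_eq_zero this
  have long : ∀ r y a, s.length ≤ y.length → y ∈ st.N →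
      padWord3 (y, [a], st.phi y a) = s ++ r → ∃ u v, y = u ++ v ∧ u.length = s.length ∧
        s = padWord3 (u, [a], st.phi y a) ∧ r = v.map (fun z => (some z, none, none)) := by
    intro r y a hy hyN h
    have hK' := hK y hyN a
    have hu : (y.take s.length).length = s.length := by simp [hy]
    have h2 := padWord3_append (y.take s.length) (st.phi y a) (y.drop s.length) a
      (by omega) (by omega)
    rw [List.take_append_drop, h] at h2
    have h3 := List.append_inj h2 (by rw [length_padWord3, hu]; simp; omega)
    exact ⟨_, _, (List.take_append_drop _ _).symm, hu, h3⟩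
  by_cases h : ∃ u a w, s = padWord3 (u, [a], w) ∧ u.length = s.length ∧ w.length ≤ st.K
  · obtain ⟨u, a, w, hsu, hul, hwl⟩ := h
    refine Or.inl (Or.inr ⟨(c u, a, ⟨w, hwl⟩), ?_⟩)
    ext r
    constructor
    · rintro ⟨v, rfl, u', hu', hN, hf⟩
      have hcc := hc.append hu' v
      have hN' := hc.mem _ _ hcc hN
      refine ⟨_, ⟨u ++ v, hN', a, rfl⟩, ?_⟩
      have hf' : st.phi (u ++ v) a = w := (hc.eq _ _ hN' hN hcc.symm a).trans hf
      rw [hf', padWord3_append _ _ _ _ (by omega) (by omega), hsu]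
    · rintro ⟨_, ⟨y, hy, a', rfl⟩, h⟩
      have hle : s.length ≤ y.length := by
        by_contra hlt
        push Not at hlt
        have := short r y a' hlt hy h
        rw [this, List.append_nil, hsu] at h
        have := padWord3_injective h
        simp only [Prod.mk.injEq] at this
        rw [this.1] at hlt
        omega
      obtain ⟨u1, v, rfl, hu1, hs1, hr⟩ := long r y a' hle hy h
      have := padWord3_injective (hsu.symm.trans hs1)
      simp only [Prod.mk.injEq, List.cons.injEq, and_true] at this
      obtain ⟨rfl, rfl, rfl⟩ := this
      exact ⟨v, hr, u, rfl, hy, rfl⟩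
  · refine Or.inr ?_
    have hsub : ∀ r, r ∈ P.leftQuotient s → r = [] := by
      rintro r ⟨_, ⟨y, hy, a, rfl⟩, hr⟩
      rcases lt_or_ge y.length s.length with hlt | hge
      · exact short r y a hlt hy hr
      · obtain ⟨u, v, hy', hu, hs', -⟩ := long r y a hge hy hr
        exact absurd ⟨u, a, _, hs', hu, hK y hy a⟩ h
    by_cases h0 : [] ∈ P.leftQuotient s
    · right
      ext r
      exact ⟨hsub r, fun hr => (show r = [] from hr) ▸ h0⟩
    · left
      ext r
      exact ⟨fun hr => absurd (hsub r hr ▸ hr) h0, fun hr => hr.elim⟩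

/-- Conversely, automata for `N` and for the padded graph of the stacking function combine to a
finite congruence.  Words no longer than the bound are remembered verbatim; for a longer word `u`
the padded triples `(u, a, w)` are run for all of the finitely many `a` and `w`. -/
theorem exists_isCong_of_isAuto {α : Type} [Finite α] {st : StackingData α} (h : st.IsAuto)
    (hK : ∀ y ∈ st.N, ∀ a, (st.phi y a).length ≤ st.K) :
    ∃ (F : Type) (_ : Finite F) (c : List α → F), IsCong st.N st.phi c := by
  classical
  obtain ⟨⟨σ, _, M, hM⟩, ⟨τ, _, T, hT⟩⟩ := h
  have hM' : ∀ u, u ∈ st.N ↔ M.eval u ∈ M.accept := fun u => by rw [← hM]; rfl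
  have hT' : ∀ y a w, (y ∈ st.N ∧ st.phi y a = w) ↔ T.eval (padWord3 (y, [a], w)) ∈ T.accept := by
    intro y a w
    have : padWord3 (y, [a], w) ∈ T.accepts ↔ T.eval (padWord3 (y, [a], w)) ∈ T.accept := Iff.rfl
    rw [← this, hT]
    constructor
    · rintro ⟨hy, rfl⟩
      exact ⟨_, ⟨y, hy, a, rfl⟩, rfl⟩
    · rintro ⟨_, ⟨y', hy, a', rfl⟩, he⟩
      have := padWord3_injective he
      simp only [Prod.mk.injEq, List.cons.injEq, and_true] at this
      obtain ⟨rfl, rfl, rfl⟩ := this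
      exact ⟨hy, rfl⟩
  let c : List α → {u : List α // u.length < st.K + 1} ⊕
      (σ × (α × {w : List α // w.length ≤ st.K} → τ)) := fun u =>
    if hu : u.length < st.K + 1 then Sum.inl ⟨u, hu⟩
    else Sum.inr (M.eval u, fun p => T.eval (padWord3 (u, [p.1], p.2.1)))
  have hcc : ∀ v v', c v = c v' → v = v' ∨ (st.K + 1 ≤ v.length ∧ st.K + 1 ≤ v'.length ∧
      M.eval v = M.eval v' ∧ ∀ a w, w.length ≤ st.K →
        T.eval (padWord3 (v, [a], w)) = T.eval (padWord3 (v', [a], w))) := by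
    intro v v' hv
    by_cases h1 : v.length < st.K + 1 <;> by_cases h2 : v'.length < st.K + 1
    · left
      simpa only [c, h1, h2, dif_pos, Sum.inl.injEq, Subtype.mk.injEq] using hv
    · simp only [c, h1, h2, dif_pos, dif_neg, not_false_eq_true, reduceCtorEq] at hv
    · simp only [c, h1, h2, dif_pos, dif_neg, not_false_eq_true, reduceCtorEq] at hv
    · right
      simp only [c, h1, h2, dif_neg, not_false_eq_true, Sum.inr.injEq, Prod.mk.injEq] at hv
      exact ⟨by omega, by omega, hv.1, fun a w hw => congrFun hv.2 (a, ⟨w, hw⟩)⟩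
  refine ⟨_, inferInstance, c, ?_, ?_, ?_⟩
  · intro v v' a hv
    rcases hcc v v' hv with rfl | ⟨h1, h2, h3, h4⟩
    · rfl
    · have g1 : ¬ (v ++ [a]).length < st.K + 1 := by simp; omega
      have g2 : ¬ (v' ++ [a]).length < st.K + 1 := by simp; omega
      simp only [c, g1, g2, dif_neg, not_false_eq_true, Sum.inr.injEq, Prod.mk.injEq]
      refine ⟨by simp [DFA.eval_append_singleton, h3], ?_⟩
      funext p
      rw [padWord3_snoc _ _ _ _ (by omega) (by have := p.2.2; omega),
        padWord3_snoc _ _ _ _ (by omega) (by have := p.2.2; omega),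
        DFA.eval_append_singleton, DFA.eval_append_singleton, h4 _ _ p.2.2]
  · intro v v' hv hN
    rcases hcc v v' hv with rfl | ⟨-, -, h3, -⟩
    · exact hN
    · rw [hM'] at hN ⊢
      rwa [← h3]
  · intro v v' hN hN' hv a
    rcases hcc v v' hv with rfl | ⟨-, -, -, h4⟩
    · rfl
    · have := (hT' v a _).1 ⟨hN, rfl⟩
      rw [h4 _ _ (hK v hN a)] at this
      exact ((hT' v' a _).2 this).2.symm

/-! ### Stacking structures relative to a subgroup -/

theorem wordVal_append {G α : Type} [Monoid G] (π : α → G) (u v : List α) :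
    wordVal π (u ++ v) = wordVal π u * wordVal π v := by
  simp [wordVal]

theorem wordVal_nil {G α : Type} [Monoid G] (π : α → G) : wordVal π [] = 1 := rfl

theorem wordVal_cons {G α : Type} [Monoid G] (π : α → G) (a : α) (v : List α) :
    wordVal π (a :: v) = π a * wordVal π v := by
  simp [wordVal]

theorem wordVal_singleton {G α : Type} [Monoid G] (π : α → G) (a : α) :
    wordVal π [a] = π a := by
  simp [wordVal]

/-- One step of the stacking recursion modulo `H`.  The pair `(q₁, q₂)` lies below `(p₁, p₂)` when
the edge `(p₁, p₂)` is not in the tree, is not one of the edges at the base vertex labelled by a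
letter of `B`, and `q₂` occurs in the word `f p₁ p₂` right after a prefix `u` such that `q₁ ∈ L`
represents the coset of `p₁ u`. -/
def Below {G α : Type} [Group G] (π : α → G) (inv : α → α) (H : Subgroup G)
    (L : Set (List α)) (B : Set α) (f : List α → α → List α) (q p : List α × α) : Prop :=
  p.1 ∈ L ∧ p.1 ++ [p.2] ∉ L ∧ (¬ ∃ y', p.1 = y' ++ [inv p.2]) ∧ ¬ (p.1 = [] ∧ p.2 ∈ B) ∧
    ∃ u u' : List α, f p.1 p.2 = u ++ q.2 :: u' ∧ q.1 ∈ L ∧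
      wordVal π q.1 * (wordVal π (p.1 ++ u))⁻¹ ∈ H

/-- What an autostackable structure of `G` respecting `H` induces on the right cosets of `H`:
`L` is a prefix-closed transversal, `B` a set of letters with values in `H`, and `f` a stacking
function on `L` whose recursion is well founded away from the letters of `B` at the base vertex.
Regularity is recorded by the finite congruence `c`.  For `H = ⊥` and `B = ∅` this is an
autostackable structure of `G` itself. The class of the empty word is required to be a singleton
(`cong_nil`), so that the congruence detects the base vertex. -/
structure RelStacking {G α : Type} [Group G] (π : α → G) (inv : α → α) (H : Subgroup G) where
  L : Set (List α)
  B : Set α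
  f : List α → α → List α
  K : ℕ
  F : Type
  fin : Finite F
  c : List α → F
  pre : PrefixClosed L
  transversal : ∀ g : G, ∃! v, v ∈ L ∧ wordVal π v * g⁻¹ ∈ H
  B_mem : ∀ b ∈ B, π b ∈ H
  F1 : ∀ v ∈ L, ∀ a, wordVal π (f v a) = π a ∧ (f v a).length ≤ K
  F2 : ∀ v ∈ L, ∀ a, (v ++ [a] ∈ L ∨ ∃ v', v = v' ++ [inv a]) → f v a = [a]
  wf : WellFounded (Below π inv H L B f)
  cong : IsCong L f c
  cong_nil : ∀ v, c v = c [] → v = []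

section FromStacking

variable {G α : Type} [Group G] {π : α → G} {inv : α → α} {st : StackingData α}

/-- Condition (F3) as well-foundedness. -/
theorem wellFounded_of_isStacking (h : IsStacking G π inv st) :
    WellFounded (Below π inv ⊥ st.N ∅ st.phi) := by
  rw [wellFounded_iff_isEmpty_descending_chain]
  refine ⟨fun ⟨s, hs⟩ => h.F3 ⟨s, fun i => ?_⟩⟩
  obtain ⟨h1, h2, h3, -, u, u', h5, h6, h7⟩ := hs i
  refine ⟨h1, h2, h3, u, u', h5, h6, ?_⟩
  rwa [Subgroup.mem_bot, mul_inv_eq_one] at h7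

/-- A congruence for a language, refined by the first letter, serves for every sublanguage that
is cut out by the first letter. -/
theorem isCong_head {N N' : Set (List α)} {f : List α → α → List α} {F : Type} {c : List α → F}
    (hc : IsCong N f c) (hN : N' ⊆ N)
    (hmem : ∀ v v', c v = c v' → v.head? = v'.head? → v ∈ N' → v' ∈ N') :
    IsCong N' f (fun v => (c v, v.head?)) where
  snoc v v' a h := by
    simp only [Prod.mk.injEq] at h ⊢
    exact ⟨hc.snoc _ _ _ h.1, by rw [List.head?_append, List.head?_append, h.2]⟩
  mem v v' h hv := by
    simp only [Prod.mk.injEq] at h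
    exact hmem v v' h.1 h.2 hv
  eq v v' hv hv' h a := by
    simp only [Prod.mk.injEq] at h
    exact hc.eq v v' (hN hv) (hN hv') h.1 a

/-- An autostackable structure of `G` is one relative to the trivial subgroup. Remembering the first
letter separates the empty word from all others. -/
theorem relStacking_bot [Finite α] (h : IsStacking G π inv st) (ha : st.IsAuto) :
    Nonempty (RelStacking π inv ⊥) := by
  obtain ⟨F, _, c, hc⟩ := exists_isCong_of_isAuto ha (fun y hy a => (h.F1 y hy a).2)
  exact ⟨{
    L := st.N
    B := ∅
    f := st.phi
    K := st.K
    F := F × Option α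
    fin := inferInstance
    c := fun v => (c v, v.head?)
    pre := h.prefixClosed
    transversal := fun g => by simpa [mul_inv_eq_one] using h.nf g
    B_mem := fun b hb => hb.elim
    F1 := h.F1
    F2 := h.F2
    wf := wellFounded_of_isStacking h
    cong := isCong_head hc subset_rfl fun v v' h _ => hc.mem v v' h
    cong_nil := fun v hv => by simpa using (Prod.ext_iff.1 hv).2 }⟩

/-- If `N = N_H · N_Tr` is respected by `H`, the restriction of the stacking function to the
transversal `N_Tr` is a stacking structure on the cosets of `H`: by translation invariance, an
infinite recursion on `N_Tr` would lift to one on `N`. -/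
theorem relStacking_of_respects [Finite α] {H : Subgroup G} (h : IsStacking G π inv st)
    (ha : st.IsAuto) (hr : RespectsSubgroup π inv st H) :
    Nonempty (RelStacking π inv H) := by
  obtain ⟨F, _, c, hc⟩ := exists_isCong_of_isAuto ha (fun y hy a => (h.F1 y hy a).2)
  obtain ⟨B, hBinv, hBmem, -, NH, Tr, hNHB, hNHpre, hNH, hTrpre, hTr, hN, -, hinv⟩ := hr
  have hNHmem : ∀ w ∈ NH, wordVal π w ∈ H := fun w hw => by
    refine Subgroup.list_prod_mem _ ?_
    simp only [List.mem_map, forall_exists_index, and_imp, forall_apply_eq_imp_iff₂]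
    exact fun b hb => hBmem b (hNHB w hw b hb)
  have huniq : ∀ v ∈ Tr, ∀ v' ∈ Tr, wordVal π v * (wordVal π v')⁻¹ ∈ H → v = v' := by
    intro v hv v' hv' hvv
    exact (hTr (wordVal π v')).unique ⟨hv, hvv⟩ ⟨hv', by simp [H.one_mem]⟩
  have hTnil : [] ∈ Tr := by
    obtain ⟨w, ⟨hw, -⟩, -⟩ := hTr 1
    exact hTrpre w hw [] ⟨_, rfl⟩
  have hHnil : [] ∈ NH := by
    obtain ⟨w, ⟨hw, -⟩, -⟩ := hNH 1 H.one_mem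
    exact hNHpre w hw [] ⟨_, rfl⟩
  have hTN : Tr ⊆ st.N := fun v hv => by rw [hN]; exact ⟨[], hHnil, v, hv, rfl⟩
  have hmemN : ∀ u ∈ NH, ∀ v ∈ Tr, u ++ v ∈ st.N := fun u hu v hv => by
    rw [hN]; exact ⟨u, hu, v, hv, rfl⟩
  have hnilB : ∀ b ∈ B, ∀ v, b :: v ∉ Tr := by
    intro b hb v hv
    have h1 : [b] ∈ Tr := hTrpre _ hv _ ⟨v, rfl⟩
    have := huniq _ h1 _ hTnil (by simpa [wordVal] using hBmem b hb)
    simp at this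
  -- the coset representatives are the normal forms that do not start with a letter of `B`
  have hTr_iff : ∀ v, v ∈ Tr ↔ v ∈ st.N ∧ ∀ b ∈ v.head?, b ∉ B := by
    intro v
    constructor
    · intro hv
      refine ⟨hTN hv, ?_⟩
      cases v with
      | nil => simp
      | cons b v =>
        intro b' hb' hB
        simp only [List.head?_cons, Option.mem_def, Option.some.injEq] at hb'
        subst hb'
        exact hnilB _ hB _ hv
    · rintro ⟨hv, hb⟩
      rw [hN] at hv
      obtain ⟨u, hu, w, hw, rfl⟩ := hv
      cases u with
      | nil => exact hw
      | cons b u => exact absurd (hNHB _ hu b (by simp)) (hb b (by simp))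
  have hinv' : ∀ u ∈ NH, ∀ v ∈ Tr, ∀ a, ¬ (v = [] ∧ a ∈ B) →
      st.phi (u ++ v) a = st.phi v a := by
    intro u hu v hv a hne
    refine hinv a v (hTN hv) (u ++ v) (hmemN u hu v hv) ?_ ?_
    · rintro ⟨h1, h2⟩
      exact hne ⟨huniq _ hv _ hTnil (by simpa [wordVal] using h1), h2⟩
    · exact ⟨_, hNHmem u hu, wordVal_append π u v⟩
  -- left translation by `H` does not create new tree edges
  have hnd1 : ∀ u ∈ NH, ∀ v ∈ Tr, ∀ a, ¬ (v = [] ∧ a ∈ B) →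
      (u ++ v) ++ [a] ∈ st.N → v ++ [a] ∈ Tr := by
    intro u hu v hv a hne hm
    rw [hN] at hm
    obtain ⟨u', hu', v', hv', he⟩ := hm
    rcases List.eq_nil_or_concat v' with rfl | ⟨v'', b, rfl⟩
    · rw [List.append_nil] at he
      have ha : a ∈ B := hNHB u' hu' a (by rw [← he]; simp)
      have huv : u ++ v ∈ NH := hNHpre u' hu' _ ⟨[a], he⟩
      have hval := hNHmem _ huv
      rw [wordVal_append] at hval
      have : wordVal π v ∈ H := (H.mul_mem_cancel_left (hNHmem u hu)).1 hval
      exact absurd ⟨huniq _ hv _ hTnil (by simpa [wordVal] using this), ha⟩ hne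
    · rw [List.concat_eq_append, ← List.append_assoc] at he
      obtain ⟨he1, he2⟩ := List.append_inj' he rfl
      simp only [List.cons.injEq, and_true] at he2
      subst he2
      have hv'' : v'' ∈ Tr := hTrpre _ hv' _ ⟨[a], by simp⟩
      have hval := congrArg (wordVal π) he1
      rw [wordVal_append, wordVal_append] at hval
      have : v = v'' := huniq _ hv _ hv'' (by
        have : wordVal π v * (wordVal π v'')⁻¹ = (wordVal π u)⁻¹ * wordVal π u' := by
          rw [mul_inv_eq_iff_eq_mul, mul_assoc, ← hval, inv_mul_cancel_left]
        rw [this]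
        exact H.mul_mem (H.inv_mem (hNHmem u hu)) (hNHmem u' hu'))
      rw [this]
      simpa using hv'
  have hnd2 : ∀ u ∈ NH, ∀ v, ∀ a, ¬ (v = [] ∧ a ∈ B) →
      (∃ y', u ++ v = y' ++ [inv a]) → ∃ y', v = y' ++ [inv a] := by
    rintro u hu v a hne ⟨y', hy⟩
    rcases List.eq_nil_or_concat v with rfl | ⟨v', b, rfl⟩
    · rw [List.append_nil] at hy
      have : inv (inv a) ∈ B := hBinv _ (hNHB u hu _ (by rw [hy]; simp))
      rw [h.gen.inv_invol] at this
      exact absurd ⟨rfl, this⟩ hne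
    · rw [List.concat_eq_append, ← List.append_assoc] at hy
      obtain ⟨-, he2⟩ := List.append_inj' hy rfl
      simp only [List.cons.injEq, and_true] at he2
      exact ⟨v', by simp [he2]⟩
  -- recursion on coset representatives lifts to the recursion on normal forms
  have hacc : ∀ p : List α × α, ∀ u ∈ NH, ∀ v ∈ Tr, p.1 = u ++ v →
      Acc (Below π inv H Tr B st.phi) (v, p.2) := by
    intro p
    induction p using (wellFounded_of_isStacking h).induction with
    | _ p ih =>
      intro u hu v hv hp
      refine ⟨_, ?_⟩
      rintro ⟨v', a'⟩ ⟨-, h2, h3, h4, w, w', h5, h6, h7⟩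
      dsimp only at h2 h3 h4 h5 h6 h7
      have hpN : p.1 ∈ st.N := hp ▸ hmemN u hu v hv
      obtain ⟨y, ⟨hyN, hyval⟩, -⟩ := h.nf (wordVal π (p.1 ++ w))
      have hyN' := hyN
      rw [hN] at hyN'
      obtain ⟨u1, hu1, v1, hv1, rfl⟩ := hyN'
      have : v1 = v' := huniq _ hv1 _ h6 (by
        rw [hp, List.append_assoc, wordVal_append, wordVal_append π u] at hyval
        have e : wordVal π v1 * (wordVal π v')⁻¹ =
            (wordVal π u1)⁻¹ * wordVal π u * (wordVal π v' * (wordVal π (v ++ w))⁻¹)⁻¹ := by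
          rw [mul_inv_rev, inv_inv, mul_assoc, ← mul_assoc (wordVal π u), ← hyval]
          group
        rw [e]
        exact H.mul_mem (H.mul_mem (H.inv_mem (hNHmem _ hu1)) (hNHmem _ hu)) (H.inv_mem h7))
      subst this
      refine ih (u1 ++ v1, a') ?_ u1 hu1 v1 hv1 rfl
      refine ⟨hpN, ?_, ?_, by simp, w, w', ?_, hyN, by simp [hyval]⟩
      · rw [hp]; exact fun hm => h2 (hnd1 u hu v hv _ h4 hm)
      · rw [hp]; exact fun hm => h3 (hnd2 u hu v _ h4 hm)
      · rw [hp, hinv' u hu v hv _ h4]; exact h5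
  exact ⟨{
    L := Tr
    B := B
    f := st.phi
    K := st.K
    F := F × Option α
    fin := inferInstance
    c := fun v => (c v, v.head?)
    pre := hTrpre
    transversal := hTr
    B_mem := hBmem
    F1 := fun v hv => h.F1 v (hTN hv)
    F2 := fun v hv a hva => h.F2 v (hTN hv) a (hva.imp_left fun x => hTN x)
    wf := by
      refine ⟨fun p => ?_⟩
      by_cases hp : p.1 ∈ Tr
      · exact hacc p [] hHnil p.1 hp rfl
      · exact ⟨_, fun q hq => absurd hq.1 hp⟩
    cong := isCong_head hc hTN fun v v' hv hh hm => by
      rw [hTr_iff] at hm ⊢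
      exact ⟨hc.mem _ _ hv hm.1, hh ▸ hm.2⟩
    cong_nil := fun v hv => by simpa using (Prod.ext_iff.1 hv).2 }⟩

end FromStacking

/-! ### Enlarging the alphabet -/

theorem exists_word {G α : Type} [Group G] {π : α → G} {inv : α → α}
    (h : IsInvGenSet G π inv) (g : G) : ∃ w : List α, wordVal π w = g := by
  have hg : g ∈ Subgroup.closure (Set.range π) := by rw [h.gen]; trivial
  induction hg using Subgroup.closure_induction with
  | mem x hx =>
    obtain ⟨a, rfl⟩ := hx
    exact ⟨[a], wordVal_singleton π a⟩
  | one => exact ⟨[], rfl⟩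
  | mul x y _ _ hx hy =>
    obtain ⟨u, rfl⟩ := hx
    obtain ⟨v, rfl⟩ := hy
    exact ⟨u ++ v, wordVal_append π u v⟩
  | inv x hx0 hx =>
    obtain ⟨u, rfl⟩ := hx
    clear hx0
    refine ⟨(u.map inv).reverse, ?_⟩
    induction u with
    | nil => simp [wordVal]
    | cons a u ih =>
      simp only [List.map_cons, List.reverse_cons, wordVal_append, wordVal_cons, mul_inv_rev, ih,
        wordVal_nil, h.val_inv, mul_one]

/-- A relative stacking structure over an alphabet `α` is also one over any larger finite
alphabet `β`: the transversal is unchanged and every new letter is stacked to a fixed word in the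
old letters, after which the recursion stays among the old letters. -/
theorem RelStacking.extend {G α β : Type} [Group G] [Finite β] {π : α → G} {inv : α → α}
    {π' : β → G} {inv' : β → β} {H : Subgroup G} (hg : IsInvGenSet G π inv)
    (S : RelStacking π inv H) (ι : α → β) (hι : Function.Injective ι)
    (hπ : ∀ a, π' (ι a) = π a) (hinv : ∀ a, inv' (ι a) = ι (inv a))
    (hinvol : ∀ b, inv' (inv' b) = b) :
    Nonempty (RelStacking π' inv' H) := by
  classical
  choose wd hwd using exists_word hg
  have hmap : Function.Injective (List.map ι) := List.map_injective_iff.2 hι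
  have hval : ∀ u : List α, wordVal π' (u.map ι) = wordVal π u := fun u => by
    simp [wordVal, Function.comp_def, hπ]
  have hnil : [] ∈ S.L := by
    obtain ⟨w, ⟨hw, -⟩, -⟩ := S.transversal 1
    exact S.pre w hw [] ⟨_, rfl⟩
  -- a partial inverse of `List.map ι`
  let un : List β → List α := Function.invFun (List.map ι)
  have hun : ∀ u, un (u.map ι) = u := Function.leftInverse_invFun hmap
  let f' : List β → β → List β := fun y b =>
    if hb : ∃ a, ι a = b then (S.f (un y) hb.choose).map ι else (wd (π' b)).map ι
  have hf1 : ∀ u a, f' (u.map ι) (ι a) = (S.f u a).map ι := by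
    intro u a
    have hb : ∃ a', ι a' = ι a := ⟨a, rfl⟩
    have : hb.choose = a := hι hb.choose_spec
    simp only [f', hb, dif_pos, this, hun]
  have hf2 : ∀ y b, (¬ ∃ a, ι a = b) → f' y b = (wd (π' b)).map ι := by
    intro y b hb
    simp only [f', hb, dif_neg, not_false_eq_true]
  let c' : List β → Option S.F := fun y =>
    if ∃ u, List.map ι u = y then some (S.c (un y)) else none
  have hc1 : ∀ u, c' (u.map ι) = some (S.c u) := by
    intro u
    have hb : ∃ u', List.map ι u' = List.map ι u := ⟨u, rfl⟩
    simp only [c', hb, if_true, hun]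
  have hc2 : ∀ y, (¬ ∃ u, List.map ι u = y) → c' y = none := by
    intro y hy
    simp only [c', hy, if_false]
  have hcc : ∀ y y', c' y = c' y' → (∃ u u', y = u.map ι ∧ y' = u'.map ι ∧ S.c u = S.c u') ∨
      ((¬ ∃ u, List.map ι u = y) ∧ ¬ ∃ u, List.map ι u = y') := by
    intro y y' h
    by_cases h1 : ∃ u, List.map ι u = y <;> by_cases h2 : ∃ u, List.map ι u = y'
    · obtain ⟨u, rfl⟩ := h1
      obtain ⟨u', rfl⟩ := h2
      rw [hc1, hc1, Option.some.injEq] at h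
      exact Or.inl ⟨u, u', rfl, rfl, h⟩
    · obtain ⟨u, rfl⟩ := h1
      rw [hc1, hc2 _ h2] at h
      simp at h
    · obtain ⟨u, rfl⟩ := h2
      rw [hc1, hc2 _ h1] at h
      simp at h
    · exact Or.inr ⟨h1, h2⟩
  have hsnoc : ∀ (u : List α) (b : β), (∃ w, List.map ι w = u.map ι ++ [b]) → ∃ a, ι a = b := by
    rintro u b ⟨w, hw⟩
    have : b ∈ List.map ι w := by rw [hw]; simp
    obtain ⟨a, -, ha⟩ := List.mem_map.1 this
    exact ⟨a, ha⟩
  have hsnoc' : ∀ (u : List α) (a : α), u.map ι ++ [ι a] = (u ++ [a]).map ι := by simp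
  obtain ⟨M, hM⟩ : ∃ M, ∀ b, (wd (π' b)).length ≤ M := by
    obtain ⟨M, hM⟩ := (Set.finite_range fun b => (wd (π' b)).length).bddAbove
    exact ⟨M, fun b => hM ⟨b, rfl⟩⟩
  have hmemL : ∀ u, List.map ι u ∈ List.map ι '' S.L ↔ u ∈ S.L := fun u =>
    hmap.mem_set_image
  have hend : ∀ (v : List α) (a : α), (∃ v', List.map ι v = v' ++ [inv' (ι a)]) →
      ∃ v', v = v' ++ [inv a] := by
    rintro v a ⟨v', hv'⟩
    rcases List.eq_nil_or_concat v with rfl | ⟨v1, b, rfl⟩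
    · simp at hv'
    · rw [List.concat_eq_append, List.map_append] at hv'
      obtain ⟨-, h2⟩ := List.append_inj' hv' rfl
      simp only [List.map_cons, List.map_nil, hinv, List.cons.injEq, and_true] at h2
      exact ⟨v1, by rw [List.concat_eq_append, hι h2]⟩
  have hacc : ∀ p : List α × α,
      Acc (Below π' inv' H (List.map ι '' S.L) (ι '' S.B) f') (p.1.map ι, ι p.2) := by
    intro p
    induction p using S.wf.induction with
    | _ p ih =>
      refine ⟨_, ?_⟩
      rintro ⟨y', b'⟩ ⟨h1, h2, h3, h4, w, w', h5, h6, h7⟩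
      dsimp only at h1 h2 h3 h4 h5 h6 h7
      rw [hf1, List.map_eq_append_iff] at h5
      obtain ⟨w1, w2, hw, rfl, hw2⟩ := h5
      rw [List.map_eq_cons_iff] at hw2
      obtain ⟨a', w3, rfl, rfl, rfl⟩ := hw2
      obtain ⟨v', hv', rfl⟩ := h6
      rw [← List.map_append, hval, hval] at h7
      rw [hmemL] at h1
      refine ih (v', a') ⟨h1, ?_, ?_, ?_, w1, w3, hw, hv', h7⟩
      · rwa [hsnoc', hmemL] at h2
      · rintro ⟨z, hz⟩
        exact h3 ⟨z.map ι, by rw [hz, hinv]; simp⟩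
      · rintro ⟨h8, h9⟩
        exact h4 ⟨by simp [h8], ⟨_, h9, rfl⟩⟩
  have : Finite S.F := S.fin
  exact ⟨{
    L := List.map ι '' S.L
    B := ι '' S.B
    f := f'
    K := max S.K M
    F := Option S.F
    fin := inferInstance
    c := c'
    pre := by
      rintro _ ⟨u, hu, rfl⟩ p ⟨q, hq⟩
      obtain ⟨u1, u2, rfl, rfl, -⟩ := List.map_eq_append_iff.1 hq.symm
      exact ⟨u1, S.pre _ hu _ ⟨u2, rfl⟩, rfl⟩
    transversal := by
      intro g
      obtain ⟨v, ⟨hv, hvg⟩, huq⟩ := S.transversal g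
      refine ⟨v.map ι, ⟨⟨v, hv, rfl⟩, by rwa [hval]⟩, ?_⟩
      rintro _ ⟨⟨v', hv', rfl⟩, h⟩
      rw [hval] at h
      rw [huq v' ⟨hv', h⟩]
    B_mem := by
      rintro _ ⟨b, hb, rfl⟩
      rw [hπ]
      exact S.B_mem b hb
    F1 := by
      rintro _ ⟨v, hv, rfl⟩ b
      by_cases hb : ∃ a, ι a = b
      · obtain ⟨a, rfl⟩ := hb
        rw [hf1, hval, hπ]
        exact ⟨(S.F1 v hv a).1, by simpa using Or.inl (S.F1 v hv a).2⟩
      · rw [hf2 _ _ hb, hval]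
        exact ⟨hwd _, by simpa using Or.inr (hM b)⟩
    F2 := by
      rintro _ ⟨v, hv, rfl⟩ b h
      by_cases hb : ∃ a, ι a = b
      · obtain ⟨a, rfl⟩ := hb
        rw [hf1, S.F2 v hv a (h.imp (fun h => by rwa [hsnoc', hmemL] at h) (hend v a))]
        rfl
      · exfalso
        rcases h with ⟨w, -, hw⟩ | ⟨v', hv'⟩
        · exact hb (hsnoc v b ⟨w, hw⟩)
        · have : inv' b ∈ List.map ι v := by rw [hv']; simp
          obtain ⟨a, -, ha⟩ := List.mem_map.1 this
          exact hb ⟨inv a, by rw [← hinv, ha, hinvol]⟩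
    wf := by
      refine ⟨fun p => ?_⟩
      obtain ⟨y, b⟩ := p
      by_cases hy : ∃ u, List.map ι u = y
      · obtain ⟨u, rfl⟩ := hy
        by_cases hb : ∃ a, ι a = b
        · obtain ⟨a, rfl⟩ := hb
          exact hacc (u, a)
        · refine ⟨_, ?_⟩
          rintro ⟨y', b'⟩ ⟨-, -, -, -, w, w', h5, ⟨u', -, rfl⟩, -⟩
          dsimp only at h5
          rw [hf2 _ _ hb] at h5
          have : b' ∈ List.map ι (wd (π' b)) := by rw [h5]; simp
          obtain ⟨a', -, rfl⟩ := List.mem_map.1 this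
          exact hacc (u', a')
      · refine ⟨_, fun q hq => ?_⟩
        obtain ⟨u, -, hu⟩ := hq.1
        exact absurd ⟨u, hu⟩ hy
    cong := by
      refine ⟨?_, ?_, ?_⟩
      · intro v v' b h
        rcases hcc v v' h with ⟨u, u', rfl, rfl, hu⟩ | ⟨h1, h2⟩
        · by_cases hb : ∃ a, ι a = b
          · obtain ⟨a, rfl⟩ := hb
            rw [hsnoc', hsnoc', hc1, hc1, S.cong.snoc _ _ a hu]
          · rw [hc2 _ (fun h => hb (hsnoc _ _ h)), hc2 _ (fun h => hb (hsnoc _ _ h))]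
        · have key : ∀ y, (¬ ∃ u, List.map ι u = y) → ¬ ∃ u, List.map ι u = y ++ [b] := by
            rintro y hy ⟨u, hu⟩
            obtain ⟨u1, u2, -, h, -⟩ := List.map_eq_append_iff.1 hu
            exact hy ⟨u1, h⟩
          rw [hc2 _ (key _ h1), hc2 _ (key _ h2)]
      · intro v v' h hv
        rcases hcc v v' h with ⟨u, u', rfl, rfl, hu⟩ | ⟨h1, h2⟩
        · rw [hmemL] at hv ⊢
          exact S.cong.mem _ _ hu hv
        · obtain ⟨u, -, hu⟩ := hv
          exact absurd ⟨u, hu⟩ h1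
      · intro v v' hv hv' h b
        rcases hcc v v' h with ⟨u, u', rfl, rfl, hu⟩ | ⟨h1, h2⟩
        · rw [hmemL] at hv hv'
          by_cases hb : ∃ a, ι a = b
          · obtain ⟨a, rfl⟩ := hb
            rw [hf1, hf1, S.cong.eq _ _ hv hv' hu]
          · rw [hf2 _ _ hb, hf2 _ _ hb]
        · obtain ⟨u, -, hu⟩ := hv
          exact absurd ⟨u, hu⟩ h1
    cong_nil := by
      intro v h
      rcases hcc v [] h with ⟨u, u', rfl, h0, hu⟩ | ⟨h1, h2⟩
      · have : u' = [] := by simpa using h0.symm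
        subst this
        rw [S.cong_nil u hu]
        rfl
      · exact absurd ⟨[], rfl⟩ h2 }⟩

/-! ### Normal forms of the HNN extension -/

section HNN

open HNNExtension

variable {G C : Type} [Group G] {A B : Subgroup G} {φ : A ≃* B}

/-- The subgroup whose right cosets are represented by the syllables of a normal form: the trivial
subgroup for the initial syllable (`none`), which thus ranges over all of `G`, and
`toSubgroup A B e` for a syllable following `t ^ e`. -/
def modeSub (A B : Subgroup G) : Option ℤˣ → Subgroup G
  | none => ⊥
  | some e => toSubgroup A B e

/-- The letters `C ⊕ ℤˣ` as elements of the HNN extension; `Sum.inr e` stands for `t ^ e`. -/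
def letter (φ : A ≃* B) (π : C → G) : C ⊕ ℤˣ → HNNExtension G A B φ :=
  Sum.elim (fun c => of (π c)) (fun e => t ^ (e : ℤ))

theorem wordVal_letter_map (π : C → G) (v : List C) :
    wordVal (letter φ π) (v.map Sum.inl) = of (wordVal π v) := by
  induction v with
  | nil => simp [wordVal]
  | cons a v ih => rw [List.map_cons, wordVal_cons, wordVal_cons, ih, map_mul]; rfl

theorem zpow_mul_of (e : ℤˣ) (a : G) (ha : a ∈ toSubgroup A B e) :
    ∃ b ∈ toSubgroup A B (-e), (t ^ (e : ℤ) * of a : HNNExtension G A B φ) =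
      of b * t ^ (e : ℤ) := by
  rcases Int.units_eq_one_or e with rfl | rfl
  · exact ⟨φ ⟨a, ha⟩, (φ ⟨a, ha⟩).2, by simpa using t_mul_of (φ := φ) ⟨a, ha⟩⟩
  · refine ⟨φ.symm ⟨a, ha⟩, (φ.symm ⟨a, ha⟩).2, ?_⟩
    simpa using inv_t_mul_of (φ := φ) ⟨a, ha⟩

theorem zpow_neg_unit (e : ℤˣ) :
    (t ^ ((-e : ℤˣ) : ℤ) : HNNExtension G A B φ) = (t ^ (e : ℤ))⁻¹ := by
  rw [Units.val_neg, zpow_neg]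

/-- `NF L y m v` states that the word `y = v₀ t^{e₁} v₁ ⋯ t^{eₙ} vₙ` is in normal form with last
syllable `vₙ = v` of mode `m`: `v₀ ∈ L none`, `vᵢ ∈ L (some eᵢ)`, and no subword `t^{-e} t^{e}`
occurs. -/
inductive NF (L : Option ℤˣ → Set (List C)) : List (C ⊕ ℤˣ) → Option ℤˣ → List C → Prop
  | base (v : List C) : v ∈ L none → NF L (v.map Sum.inl) none v
  | cons (y : List (C ⊕ ℤˣ)) (m : Option ℤˣ) (v : List C) (e : ℤˣ) (w : List C) :
      NF L y m v → ¬ (m = some (-e) ∧ v = []) → w ∈ L (some e) →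
      NF L (y ++ Sum.inr e :: w.map Sum.inl) (some e) w

section Parse

variable {L : Option ℤˣ → Set (List C)}

theorem NF.mem {y : List (C ⊕ ℤˣ)} {m : Option ℤˣ} {v : List C} (h : NF L y m v) : v ∈ L m := by
  cases h <;> assumption

theorem NF.exists_split {y : List (C ⊕ ℤˣ)} {m : Option ℤˣ} {v : List C} (h : NF L y m v) :
    (m = none ∧ y = v.map Sum.inl) ∨ ∃ e y₁ m₁ v₁, m = some e ∧
      y = y₁ ++ Sum.inr e :: v.map Sum.inl ∧ NF L y₁ m₁ v₁ ∧ ¬ (m₁ = some (-e) ∧ v₁ = []) := by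
  cases h with
  | base v hv => exact Or.inl ⟨rfl, rfl⟩
  | cons y m v e w hy hne hw => exact Or.inr ⟨e, y, m, v, rfl, rfl, hy, hne⟩

theorem NF.snoc {y : List (C ⊕ ℤˣ)} {m : Option ℤˣ} {v : List C} (h : NF L y m v) {c : C}
    (hc : v ++ [c] ∈ L m) : NF L (y ++ [Sum.inl c]) m (v ++ [c]) := by
  rcases h.exists_split with ⟨rfl, rfl⟩ | ⟨e, y₁, m₁, v₁, rfl, rfl, h1, h2⟩
  · simpa using NF.base (L := L) _ hc
  · simpa using NF.cons _ _ _ _ _ h1 h2 hc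

open Classical in
/-- One step of reading a normal form from left to right, the state being the mode and the content
of the current syllable, or `none` after a failure. -/
noncomputable def step (L : Option ℤˣ → Set (List C)) :
    Option (Option ℤˣ × List C) → C ⊕ ℤˣ → Option (Option ℤˣ × List C)
  | none, _ => none
  | some (m, v), Sum.inl c => if v ++ [c] ∈ L m then some (m, v ++ [c]) else none
  | some (m, v), Sum.inr e => if m = some (-e) ∧ v = [] then none else some (some e, [])

/-- The state reached after reading a word. -/
noncomputable def run (L : Option ℤˣ → Set (List C)) (y : List (C ⊕ ℤˣ)) :
    Option (Option ℤˣ × List C) :=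
  y.foldl (step L) (some (none, []))

theorem run_append (y z : List (C ⊕ ℤˣ)) : run L (y ++ z) = z.foldl (step L) (run L y) := by
  simp [run]

theorem run_snoc (y : List (C ⊕ ℤˣ)) (z : C ⊕ ℤˣ) :
    run L (y ++ [z]) = step L (run L y) z := by
  simp [run]

theorem foldl_step_none (z : List (C ⊕ ℤˣ)) : z.foldl (step L) none = none := by
  induction z with
  | nil => rfl
  | cons a z ih => simpa [step] using ih

theorem foldl_step_map (hpre : ∀ m, PrefixClosed (L m)) (m : Option ℤˣ) (v : List C)
    (hv : v ∈ L m) : (v.map Sum.inl).foldl (step L) (some (m, [])) = some (m, v) := by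
  induction v using List.reverseRecOn with
  | nil => rfl
  | append_singleton v c ih =>
    rw [List.map_append, List.foldl_append, ih (hpre m _ hv _ ⟨[c], rfl⟩)]
    simp [step, hv]

theorem NF.run (hpre : ∀ m, PrefixClosed (L m)) {y : List (C ⊕ ℤˣ)} {m : Option ℤˣ} {v : List C}
    (h : NF L y m v) : run L y = some (m, v) := by
  induction h with
  | base v hv => exact foldl_step_map hpre _ _ hv
  | cons y m v e w _ hne hw ih =>
    rw [run_append, ih, List.foldl_cons]
    simp only [step, hne, if_false]
    exact foldl_step_map hpre _ _ hw

theorem NF.of_run (hnil : [] ∈ L none) (hnil' : ∀ e, [] ∈ L (some e)) {y : List (C ⊕ ℤˣ)} :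
    ∀ {m : Option ℤˣ} {v : List C}, HNNAuto.run L y = some (m, v) → NF L y m v := by
  induction y using List.reverseRecOn with
  | nil =>
    intro m v h
    simp only [HNNAuto.run, List.foldl_nil, Option.some.injEq, Prod.mk.injEq] at h
    obtain ⟨rfl, rfl⟩ := h
    exact NF.base [] hnil
  | append_singleton y z ih =>
    intro m v h
    rw [run_snoc] at h
    rcases hr : HNNAuto.run L y with _ | ⟨m', v'⟩
    · rw [hr] at h
      simp [step] at h
    · rw [hr] at h
      cases z with
      | inl c =>
        simp only [step, Option.ite_none_right_eq_some, Option.some.injEq, Prod.mk.injEq] at h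
        obtain ⟨h1, rfl, rfl⟩ := h
        exact (ih hr).snoc h1
      | inr e =>
        simp only [step, Option.ite_none_left_eq_some, Option.some.injEq, Prod.mk.injEq] at h
        obtain ⟨h1, rfl, rfl⟩ := h
        exact NF.cons _ _ _ _ [] (ih hr) h1 (hnil' e)

end Parse

/-- The number of letters `t ^ ±1` in a word. -/
def tcount (y : List (C ⊕ ℤˣ)) : ℕ := y.countP Sum.isRight

theorem tcount_append (y z : List (C ⊕ ℤˣ)) : tcount (y ++ z) = tcount y + tcount z :=
  List.countP_append

theorem tcount_map (v : List C) : tcount (v.map Sum.inl) = 0 := by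
  simp [tcount, List.countP_map, Function.comp_def]

theorem tcount_cons_inr (e : ℤˣ) (y : List (C ⊕ ℤˣ)) :
    tcount (Sum.inr e :: y) = tcount y + 1 :=
  List.countP_cons_of_pos rfl

variable {π : C → G} {inv : C → C} (S : ∀ m : Option ℤˣ, RelStacking π inv (modeSub A B m))

theorem RelStacking.nil_mem {H : Subgroup G} (T : RelStacking π inv H) : [] ∈ T.L := by
  obtain ⟨w, ⟨hw, -⟩, -⟩ := T.transversal 1
  exact T.pre w hw [] ⟨_, rfl⟩

theorem RelStacking.unique {H : Subgroup G} (T : RelStacking π inv H) {v v' : List C}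
    (hv : v ∈ T.L) (hv' : v' ∈ T.L) (h : wordVal π v * (wordVal π v')⁻¹ ∈ H) : v = v' :=
  (T.transversal (wordVal π v')).unique ⟨hv, h⟩ ⟨hv', by simp [H.one_mem]⟩

theorem RelStacking.eq_nil {H : Subgroup G} (T : RelStacking π inv H) {v : List C}
    (hv : v ∈ T.L) (h : wordVal π v ∈ H) : v = [] :=
  T.unique hv T.nil_mem (by simpa [wordVal] using h)

/-- Right multiplication of a normal form by `g ∈ G`: an element of the associated subgroup is
split off the last syllable and carried to the left through `t ^ e`, leaving the pattern of letters
`t ^ ±1` unchanged. -/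
theorem NF.mul_of {y : List (C ⊕ ℤˣ)} {m : Option ℤˣ} {v : List C}
    (h : NF (fun m => (S m).L) y m v) (g : G) :
    ∃ y' v', NF (fun m => (S m).L) y' m v' ∧
      wordVal (letter φ π) y' = wordVal (letter φ π) y * of g ∧
      wordVal π v' * (wordVal π v * g)⁻¹ ∈ modeSub A B m ∧ tcount y' = tcount y := by
  induction h generalizing g with
  | base v hv =>
    obtain ⟨v', ⟨hv', hval⟩, -⟩ := (S none).transversal (wordVal π v * g)
    refine ⟨_, v', NF.base _ hv', ?_, hval, by rw [tcount_map, tcount_map]⟩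
    have : wordVal π v' = wordVal π v * g := by
      rw [← mul_inv_eq_one]
      exact Subgroup.mem_bot.1 hval
    rw [wordVal_letter_map, wordVal_letter_map, this, map_mul]
  | cons y m v e w hy hne hw ih =>
    obtain ⟨w', ⟨hw', hval⟩, -⟩ := (S (some e)).transversal (wordVal π w * g)
    obtain ⟨b, hb, hbt⟩ := zpow_mul_of (φ := φ) e _ (Subgroup.inv_mem _ hval)
    obtain ⟨y', v', hy', hyval, hvv, hcount⟩ := ih b
    refine ⟨_, w', NF.cons y' m v' e w' hy' ?_ hw', ?_, hval, ?_⟩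
    · rintro ⟨rfl, rfl⟩
      refine hne ⟨rfl, (S (some (-e))).eq_nil hy.mem ?_⟩
      have := Subgroup.inv_mem _ hvv
      rw [wordVal_nil, one_mul, inv_inv] at this
      exact (Subgroup.mul_mem_cancel_right _ hb).1 this
    · have e1 : wordVal π w * g = (wordVal π w' * (wordVal π w * g)⁻¹)⁻¹ * wordVal π w' := by
        group
      rw [wordVal_append, wordVal_append, wordVal_cons, wordVal_cons, wordVal_letter_map,
        wordVal_letter_map, hyval, mul_assoc, mul_assoc, mul_assoc, ← map_mul, e1, map_mul,
        ← mul_assoc (letter φ π (Sum.inr e))]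
      change _ = _ * ((t ^ (e : ℤ) * of _) * _)
      rw [hbt, mul_assoc]
      rfl
    · rw [tcount_append, tcount_append, tcount_cons_inr, tcount_cons_inr, tcount_map, tcount_map,
        hcount]

theorem NF.mul_t {y : List (C ⊕ ℤˣ)} {m : Option ℤˣ} {v : List C}
    (h : NF (fun m => (S m).L) y m v) (e : ℤˣ) :
    ∃ y' m' v', NF (fun m => (S m).L) y' m' v' ∧
      wordVal (letter φ π) y' = wordVal (letter φ π) y * t ^ (e : ℤ) := by
  by_cases hc : m = some (-e) ∧ v = []
  · obtain ⟨rfl, rfl⟩ := hc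
    rcases h.exists_split with ⟨h0, -⟩ | ⟨e', y₁, m₁, v₁, he, rfl, h1, h2⟩
    · simp at h0
    · refine ⟨y₁, m₁, v₁, h1, ?_⟩
      simp only [Option.some.injEq] at he
      subst he
      rw [wordVal_append, List.map_nil, wordVal_singleton]
      change _ = _ * t ^ ((-e : ℤˣ) : ℤ) * _
      rw [zpow_neg_unit, inv_mul_cancel_right]
  · refine ⟨_, _, _, NF.cons y m v e [] h hc (S (some e)).nil_mem, ?_⟩
    rw [wordVal_append, List.map_nil, wordVal_singleton]
    rfl

theorem exists_NF (x : HNNExtension G A B φ) :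
    ∃ y m v, NF (fun m => (S m).L) y m v ∧ wordVal (letter φ π) y = x := by
  -- right multiplication by `x` and by its inverse preserves the set of values of normal forms
  have key : ∀ x : HNNExtension G A B φ, ∀ z,
      (∃ y m v, NF (fun m => (S m).L) y m v ∧ wordVal (letter φ π) y = z) →
      (∃ y m v, NF (fun m => (S m).L) y m v ∧ wordVal (letter φ π) y = z * x) ∧
      (∃ y m v, NF (fun m => (S m).L) y m v ∧ wordVal (letter φ π) y = z * x⁻¹) := by
    intro x
    induction x using HNNExtension.induction_on with
    | of g =>
      rintro _ ⟨y, m, v, h, rfl⟩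
      obtain ⟨y₁, v₁, h1, h1', -⟩ := h.mul_of S (φ := φ) g
      obtain ⟨y₂, v₂, h2, h2', -⟩ := h.mul_of S (φ := φ) g⁻¹
      exact ⟨⟨y₁, m, v₁, h1, h1'⟩, ⟨y₂, m, v₂, h2, by rw [h2', map_inv]⟩⟩
    | t =>
      rintro _ ⟨y, m, v, h, rfl⟩
      obtain ⟨y₁, m₁, v₁, h1, h1'⟩ := h.mul_t S (φ := φ) 1
      obtain ⟨y₂, m₂, v₂, h2, h2'⟩ := h.mul_t S (φ := φ) (-1)
      exact ⟨⟨y₁, m₁, v₁, h1, by simpa using h1'⟩, ⟨y₂, m₂, v₂, h2, by simpa using h2'⟩⟩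
    | mul x₁ x₂ h1 h2 =>
      intro z hz
      rw [mul_inv_rev, ← mul_assoc, ← mul_assoc]
      exact ⟨(h2 _ (h1 z hz).1).1, (h1 _ (h2 z hz).2).2⟩
    | inv x h =>
      intro z hz
      rw [inv_inv]
      exact ⟨(h z hz).2, (h z hz).1⟩
  have h := (key x 1 ⟨[], none, [], NF.base [] (S none).nil_mem, rfl⟩).1
  rwa [one_mul] at h

/-- The transversals underlying the syllables, in the form used for Mathlib's normal words. -/
def transversalPair : NormalWord.TransversalPair G A B where
  set e := wordVal π '' (S (some e)).L
  compl e := by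
    rw [Subgroup.isComplement_iff_existsUnique_mul_inv_mem]
    intro g
    obtain ⟨v, ⟨hv, hvg⟩, -⟩ := (S (some e)).transversal g
    have inv_mem' : ∀ a b : G, a * b⁻¹ ∈ toSubgroup A B e → b * a⁻¹ ∈ toSubgroup A B e := by
      intro a b h
      simpa using Subgroup.inv_mem _ h
    refine ⟨⟨_, v, hv, rfl⟩, inv_mem' _ _ hvg, ?_⟩
    rintro ⟨_, v', hv', rfl⟩ h
    have : v' = v := (S (some e)).unique hv' hv (by
      have := Subgroup.mul_mem _ (inv_mem' _ _ h) (inv_mem' _ _ hvg)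
      change _ ∈ toSubgroup A B e
      simpa [mul_assoc] using this)
    subst this
    rfl

/-- The representative in `(S m).L` of the coset of `g`. -/
noncomputable def rep (m : Option ℤˣ) (g : G) : List C := ((S m).transversal g).choose

theorem rep_wordVal {m : Option ℤˣ} {v : List C} (hv : v ∈ (S m).L) :
    rep S m (wordVal π v) = v :=
  (S m).unique ((S m).transversal _).choose_spec.1.1 hv
    ((S m).transversal (wordVal π v)).choose_spec.1.2

/-- The word spelled by a normal word of Mathlib. -/
noncomputable def spell (w : NormalWord (transversalPair S)) : List (C ⊕ ℤˣ) :=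
  (rep S none w.head).map Sum.inl ++
    w.toList.flatMap fun x => Sum.inr x.1 :: (rep S (some x.1) x.2).map Sum.inl

/-- Every normal form is spelled by a normal word of Mathlib with the same value. -/
theorem NF.exists_normalWord {y : List (C ⊕ ℤˣ)} {m : Option ℤˣ} {v : List C}
    (h : NF (fun m => (S m).L) y m v) :
    ∃ w : NormalWord (transversalPair S), w.prod φ = wordVal (letter φ π) y ∧ spell S w = y ∧
      ∀ x ∈ w.toList.getLast?, m = some x.1 ∧ x.2 = wordVal π v := by
  induction h with
  | base v hv =>
    refine ⟨NormalWord.ofGroup (wordVal π v), ?_, ?_, by simp⟩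
    · simp [NormalWord.ReducedWord.prod, wordVal_letter_map]
    · simp [spell, rep_wordVal S hv]
  | cons y m v e w hy hne hw ih =>
    obtain ⟨W, hW1, hW2, hW3⟩ := ih
    refine ⟨{
      head := W.head
      toList := W.toList ++ [(e, wordVal π w)]
      chain := ?_
      mem_set := ?_ }, ?_, ?_, ?_⟩
    · rw [List.isChain_append]
      refine ⟨W.chain, List.isChain_singleton _, ?_⟩
      intro x hx z hz hmem
      simp only [List.head?_cons, Option.mem_def, Option.some.injEq] at hz
      subst hz
      obtain ⟨rfl, hx2⟩ := hW3 x hx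
      rw [hx2] at hmem
      have hv : v = [] := (S (some x.1)).eq_nil hy.mem hmem
      have hxe : x.1 ≠ -e := fun h => hne ⟨by rw [h], hv⟩
      simpa using Int.units_ne_iff_eq_neg.1 hxe
    · intro u g hug
      rcases List.mem_append.1 hug with h | h
      · exact W.mem_set u g h
      · simp only [List.mem_singleton, Prod.mk.injEq] at h
        obtain ⟨rfl, rfl⟩ := h
        exact ⟨w, hw, rfl⟩
    · rw [wordVal_append, wordVal_cons, wordVal_letter_map, ← hW1]
      simp [NormalWord.ReducedWord.prod, letter, mul_assoc]
    · have hw' := rep_wordVal S hw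
      refine Eq.trans ?_ (congrArg (· ++ Sum.inr e :: w.map Sum.inl) hW2)
      simp [spell, hw']
    · intro x hx
      simp only [List.getLast?_append, List.getLast?_singleton, Option.some_or, Option.mem_def,
        Option.some.injEq] at hx
      subst hx
      exact ⟨rfl, rfl⟩

/-- Britton's lemma, in the form of Mathlib's uniqueness of normal words. -/
theorem NF.unique {y y' : List (C ⊕ ℤˣ)} {m m' : Option ℤˣ} {v v' : List C}
    (h : NF (fun m => (S m).L) y m v) (h' : NF (fun m => (S m).L) y' m' v')
    (hval : wordVal (letter φ π) y = wordVal (letter φ π) y') : y = y' := by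
  obtain ⟨w, hw, rfl, -⟩ := h.exists_normalWord S (φ := φ)
  obtain ⟨w', hw', rfl, -⟩ := h'.exists_normalWord S (φ := φ)
  have : w = w' := NormalWord.prod_injective φ _ (by
    dsimp only
    rw [hw, hw', hval])
  rw [this]

/-! ### The stacking structure -/

theorem letter_inr (e : ℤˣ) :
    letter φ π (Sum.inr e) = (t ^ (e : ℤ) : HNNExtension G A B φ) := rfl

theorem letter_inl (c : C) :
    letter φ π (Sum.inl c) = (of (π c) : HNNExtension G A B φ) := rfl

/-- Reading a normal form. -/
theorem run_eq_some_iff {y : List (C ⊕ ℤˣ)} {m : Option ℤˣ} {v : List C} :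
    run (fun m => (S m).L) y = some (m, v) ↔ NF (fun m => (S m).L) y m v :=
  ⟨NF.of_run (S none).nil_mem (fun e => (S (some e)).nil_mem), NF.run fun m => (S m).pre⟩

/-- If a generator `c` may be moved across `t ^ e` to the left, then it equals in the extension a
word `t ^ {-e} s t ^ e` with `s` a word over the generators of `G`. -/
theorem exists_special (hg : IsInvGenSet G π inv) (m : Option ℤˣ) (c : C) :
    ∃ w : List (C ⊕ ℤˣ), c ∈ (S m).B → ∃ (e : ℤˣ) (s : List C), m = some e ∧
      w = Sum.inr (-e) :: (s.map Sum.inl ++ [Sum.inr e]) ∧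
      wordVal (letter φ π) w = letter φ π (Sum.inl c) := by
  by_cases hc : c ∈ (S m).B
  · have hmem := (S m).B_mem c hc
    cases m with
    | none => exact absurd (Subgroup.mem_bot.1 hmem) (hg.ne_one c)
    | some e =>
      obtain ⟨b, -, hb⟩ := zpow_mul_of (φ := φ) e (π c) hmem
      obtain ⟨s, rfl⟩ := exists_word hg b
      refine ⟨_, fun _ => ⟨e, s, rfl, rfl, ?_⟩⟩
      rw [wordVal_cons, wordVal_append, wordVal_letter_map, wordVal_singleton, letter_inr,
        letter_inr, ← hb, zpow_neg_unit, inv_mul_cancel_left, letter_inl]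
  · exact ⟨[], fun h => absurd h hc⟩

/-- The word `t ^ {-e} s t ^ e` of `exists_special`. -/
noncomputable def special (hg : IsInvGenSet G π inv) (φ : A ≃* B) (m : Option ℤˣ) (c : C) :
    List (C ⊕ ℤˣ) := (exists_special (φ := φ) S hg m c).choose

theorem special_spec (hg : IsInvGenSet G π inv) {m : Option ℤˣ} {c : C} (hc : c ∈ (S m).B) :
    ∃ (e : ℤˣ) (s : List C), m = some e ∧
      special S hg φ m c = Sum.inr (-e) :: (s.map Sum.inl ++ [Sum.inr e]) ∧
      wordVal (letter φ π) (special S hg φ m c) = letter φ π (Sum.inl c) :=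
  (exists_special (φ := φ) S hg m c).choose_spec hc

open Classical in
/-- The stacking function on a word in state `(m, v)` and a letter from `C`. -/
noncomputable def stackAt (hg : IsInvGenSet G π inv) (φ : A ≃* B) (p : Option ℤˣ × List C)
    (c : C) : List (C ⊕ ℤˣ) :=
  if p.2 = [] ∧ c ∈ (S p.1).B then special S hg φ p.1 c else ((S p.1).f p.2 c).map Sum.inl

/-- The stacking function of the HNN extension. It fixes the letters `t ^ ±1`. On a normal form
ending in `t ^ e`, a generator of the associated subgroup is replaced by a word `t ^ {-e} s t ^ e`;
in all other cases the stacking function of the last syllable applies. -/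
noncomputable def stack (hg : IsInvGenSet G π inv) (φ : A ≃* B) (y : List (C ⊕ ℤˣ)) :
    C ⊕ ℤˣ → List (C ⊕ ℤˣ)
  | Sum.inr e => [Sum.inr e]
  | Sum.inl c => (run (fun m => (S m).L) y).elim [] fun p => stackAt S hg φ p c

theorem stack_of_NF (hg : IsInvGenSet G π inv) {y : List (C ⊕ ℤˣ)} {m : Option ℤˣ} {v : List C}
    (h : NF (fun m => (S m).L) y m v) (c : C) :
    stack S hg φ y (Sum.inl c) = stackAt S hg φ (m, v) c := by
  simp only [stack, (run_eq_some_iff S).2 h, Option.elim_some]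

/-- The set of normal forms of the HNN extension: `NF` with all syllables taken from the
transversals `(S m).L`. -/
def normalForms : Set (List (C ⊕ ℤˣ)) := {y | ∃ m v, NF (fun m => (S m).L) y m v}

/-- Inversion of letters. -/
def letterInv (inv : C → C) : C ⊕ ℤˣ → C ⊕ ℤˣ := Sum.map inv Neg.neg

theorem mem_normalForms_iff {y : List (C ⊕ ℤˣ)} :
    y ∈ normalForms S ↔ run (fun m => (S m).L) y ≠ none := by
  rw [Option.ne_none_iff_exists']
  exact ⟨fun ⟨m, v, h⟩ => ⟨_, (run_eq_some_iff S).2 h⟩,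
    fun ⟨⟨m, v⟩, h⟩ => ⟨m, v, (run_eq_some_iff S).1 h⟩⟩

theorem normalForms_prefixClosed : PrefixClosed (normalForms S) := by
  rintro w hw p ⟨s, rfl⟩
  rw [mem_normalForms_iff] at hw ⊢
  intro hp
  rw [run_append, hp, foldl_step_none] at hw
  exact hw rfl

theorem NF.snoc_mem_iff {y : List (C ⊕ ℤˣ)} {m : Option ℤˣ} {v : List C}
    (h : NF (fun m => (S m).L) y m v) (c : C) :
    y ++ [Sum.inl c] ∈ normalForms S ↔ v ++ [c] ∈ (S m).L := by
  rw [mem_normalForms_iff, run_snoc, (run_eq_some_iff S).2 h]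
  simp [step]

/-- A normal form with nonempty last syllable ends in the last letter of that syllable, and one
with empty last syllable does not end in a letter of `C`. -/
theorem NF.ends_iff {y : List (C ⊕ ℤˣ)} {m : Option ℤˣ} {v : List C}
    (h : NF (fun m => (S m).L) y m v) (c : C) :
    (∃ y', y = y' ++ [Sum.inl c]) ↔ ∃ v', v = v' ++ [c] := by
  rcases v.eq_nil_or_concat' with rfl | ⟨v, d, rfl⟩
  · refine iff_of_false ?_ (by simp)
    rintro ⟨y', hy⟩
    rcases h.exists_split with ⟨rfl, rfl⟩ | ⟨e, y₁, m₁, v₁, rfl, rfl, h1, h2⟩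
    · simp at hy
    · have := congrArg List.getLast? hy
      simp at this
  · have : ∃ y₀ : List (C ⊕ ℤˣ), y = y₀ ++ [Sum.inl d] := by
      rcases h.exists_split with ⟨rfl, rfl⟩ | ⟨e, y₁, m₁, v₁, rfl, rfl, h1, h2⟩
      · exact ⟨v.map Sum.inl, by simp⟩
      · exact ⟨y₁ ++ Sum.inr e :: v.map Sum.inl, by simp⟩
    obtain ⟨y₀, rfl⟩ := this
    constructor
    · rintro ⟨y', hy⟩
      have := congrArg List.getLast? hy
      simp only [List.getLast?_append, List.getLast?_singleton, Option.some_or, Option.some.injEq,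
        Sum.inl.injEq] at this
      exact ⟨v, by rw [this]⟩
    · rintro ⟨v', hv⟩
      have := congrArg List.getLast? hv
      simp only [List.getLast?_append, List.getLast?_singleton, Option.some_or,
        Option.some.injEq] at this
      exact ⟨y₀, by rw [this]⟩

/-- Appending a letter `t ^ e` to a normal form either gives a normal form or cancels. -/
theorem inr_degenerate {y : List (C ⊕ ℤˣ)} (hy : y ∈ normalForms S) (e : ℤˣ) :
    y ++ [Sum.inr e] ∈ normalForms S ∨ ∃ y', y = y' ++ [letterInv inv (Sum.inr e)] := by
  obtain ⟨m, v, h⟩ := hy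
  by_cases hc : m = some (-e) ∧ v = []
  · obtain ⟨rfl, rfl⟩ := hc
    rcases h.exists_split with ⟨h0, -⟩ | ⟨e', y₁, m₁, v₁, he, rfl, h1, h2⟩
    · simp at h0
    · simp only [Option.some.injEq] at he
      subst he
      exact Or.inr ⟨y₁, rfl⟩
  · exact Or.inl ⟨_, _, NF.cons y m v e [] h hc (S (some e)).nil_mem⟩

theorem normalForms_existsUnique (x : HNNExtension G A B φ) :
    ∃! w, w ∈ normalForms S ∧ wordVal (letter φ π) w = x := by
  obtain ⟨y, m, v, h, rfl⟩ := exists_NF S x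
  refine ⟨y, ⟨⟨m, v, h⟩, rfl⟩, ?_⟩
  rintro y' ⟨⟨m', v', h'⟩, hval⟩
  exact h'.unique S h hval

include S in
theorem letter_isInvGenSet (hg : IsInvGenSet G π inv) :
    IsInvGenSet (HNNExtension G A B φ) (letter φ π) (letterInv inv) where
  ne_one z := by
    cases z with
    | inl c =>
      rw [letter_inl, Ne, ← map_one (of : G →* HNNExtension G A B φ)]
      exact fun h => hg.ne_one c (of_injective φ h)
    | inr e =>
      intro h
      -- `t ^ e` and the empty word are distinct normal forms
      have h1 : NF (fun m => (S m).L) ([] : List (C ⊕ ℤˣ)) none [] := NF.base [] (S none).nil_mem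
      have h2 : NF (fun m => (S m).L) ([Sum.inr e] : List (C ⊕ ℤˣ)) (some e) [] :=
        NF.cons [] none [] e [] h1 (by simp) (S (some e)).nil_mem
      have := h2.unique S h1 (φ := φ) (by rw [wordVal_singleton, h, wordVal_nil])
      simp at this
  inv_invol z := by
    cases z with
    | inl c => simp [letterInv, hg.inv_invol]
    | inr e => simp [letterInv]
  val_inv z := by
    cases z with
    | inl c => simp [letterInv, letter, hg.val_inv]
    | inr e => exact zpow_neg_unit e
  gen := by
    rw [eq_top_iff]
    intro x _
    obtain ⟨y, -, -, -, rfl⟩ := exists_NF S x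
    refine Subgroup.list_prod_mem _ fun z hz => ?_
    obtain ⟨a, -, rfl⟩ := List.mem_map.1 hz
    exact Subgroup.subset_closure ⟨a, rfl⟩

/-- A bound for the lengths of the values of the stacking function. -/
theorem exists_bound [Finite C] (hg : IsInvGenSet G π inv) (φ : A ≃* B) :
    ∃ K : ℕ, ∀ y ∈ normalForms S, ∀ z, (stack S hg φ y z).length ≤ K := by
  obtain ⟨K₁, hK₁⟩ := (Set.finite_range fun m => (S m).K).bddAbove
  obtain ⟨K₂, hK₂⟩ :=
    (Set.finite_range fun p : Option ℤˣ × C => (special S hg φ p.1 p.2).length).bddAbove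
  refine ⟨max 1 (max K₁ K₂), ?_⟩
  rintro y ⟨m, v, h⟩ (c | e)
  · rw [stack_of_NF S hg h, stackAt]
    split_ifs
    · exact le_max_of_le_right (le_max_of_le_right (hK₂ ⟨(m, c), rfl⟩))
    · rw [List.length_map]
      exact le_max_of_le_right (le_max_of_le_left
        (((S m).F1 v h.mem c).2.trans (hK₁ ⟨m, rfl⟩)))
  · exact le_max_left _ _

theorem stack_val (hg : IsInvGenSet G π inv) {y : List (C ⊕ ℤˣ)} (hy : y ∈ normalForms S)
    (z : C ⊕ ℤˣ) : wordVal (letter φ π) (stack S hg φ y z) = letter φ π z := by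
  obtain ⟨m, v, h⟩ := hy
  cases z with
  | inl c =>
    rw [stack_of_NF S hg h, stackAt]
    split_ifs with hc
    · obtain ⟨-, -, -, -, h⟩ := special_spec S (φ := φ) hg hc.2
      exact h
    · rw [wordVal_letter_map, ((S m).F1 v h.mem c).1, letter_inl]
  | inr e => exact wordVal_singleton _ _

theorem stack_degenerate (hg : IsInvGenSet G π inv) {y : List (C ⊕ ℤˣ)} (hy : y ∈ normalForms S)
    (z : C ⊕ ℤˣ)
    (hz : y ++ [z] ∈ normalForms S ∨ ∃ y', y = y' ++ [letterInv inv z]) :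
    stack S hg φ y z = [z] := by
  obtain ⟨m, v, h⟩ := hy
  cases z with
  | inl c =>
    change _ ∨ ∃ y', y = y' ++ [Sum.inl (inv c)] at hz
    rw [h.snoc_mem_iff, h.ends_iff] at hz
    rw [stack_of_NF S hg h, stackAt, if_neg]
    · rw [(S m).F2 v h.mem c hz]
      rfl
    · rintro ⟨hv, hc⟩
      dsimp only at hv hc
      subst hv
      rcases hz with hz | ⟨v', hv'⟩
      · have := (S m).eq_nil hz (by
          rw [List.nil_append, wordVal_singleton]
          exact (S m).B_mem c hc)
        simp at this
      · simp at hv'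
  | inr e => rfl

/-- The relation of condition (F3) on pairs of a normal form and a letter. -/
def Prec (hg : IsInvGenSet G π inv) (φ : A ≃* B) (q p : List (C ⊕ ℤˣ) × (C ⊕ ℤˣ)) : Prop :=
  p.1 ∈ normalForms S ∧ p.1 ++ [p.2] ∉ normalForms S ∧
    (¬ ∃ y', p.1 = y' ++ [letterInv inv p.2]) ∧
    ∃ u u', stack S hg φ p.1 p.2 = u ++ q.2 :: u' ∧ q.1 ∈ normalForms S ∧
      wordVal (letter φ π) q.1 = wordVal (letter φ π) (p.1 ++ u)

theorem acc_inr (hg : IsInvGenSet G π inv) (y : List (C ⊕ ℤˣ)) (e : ℤˣ) :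
    Acc (Prec S hg φ) (y, Sum.inr e) := by
  refine ⟨_, ?_⟩
  rintro q ⟨h1, h2, h3, -⟩
  exact ((inr_degenerate S (inv := inv) h1 e).elim h2 h3).elim

/-- A prefix of `s t ^ e` that is followed by a letter of `C` is a word over `C`. -/
theorem eq_map_of_append_eq {s : List C} {e : ℤˣ} {u u' : List (C ⊕ ℤˣ)} {c : C}
    (h : s.map Sum.inl ++ [Sum.inr e] = u ++ Sum.inl c :: u') :
    ∃ s₁ : List C, u = s₁.map Sum.inl := by
  induction s generalizing u with
  | nil => rcases u with _ | ⟨a, u⟩ <;> simp at h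
  | cons d s ih =>
    rcases u with _ | ⟨a, u⟩
    · exact ⟨[], rfl⟩
    · simp only [List.map_cons, List.cons_append, List.cons.injEq] at h
      obtain ⟨rfl, h⟩ := h
      obtain ⟨s₁, rfl⟩ := ih h
      exact ⟨d :: s₁, rfl⟩

/-- Replacing a generator `c` by `t ^ {-e} s t ^ e` moves `s` to a normal form with fewer letters
`t ^ ±1`; every other step leaves that number unchanged and descends in the well-founded relation
of the last syllable. -/
theorem acc_inl (hg : IsInvGenSet G π inv) (n : ℕ) :
    ∀ (y : List (C ⊕ ℤˣ)) (m : Option ℤˣ) (v : List C), NF (fun m => (S m).L) y m v →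
      tcount y = n → ∀ c, Acc (Prec S hg φ) (y, Sum.inl c) := by
  induction n using Nat.strong_induction_on with
  | _ n ih =>
  suffices H : ∀ (m : Option ℤˣ) (p : List C × C) (y : List (C ⊕ ℤˣ)),
      NF (fun m => (S m).L) y m p.1 → tcount y = n → Acc (Prec S hg φ) (y, Sum.inl p.2) from
    fun y m v h hn c => H m (v, c) y h hn
  intro m p
  induction p using (S m).wf.induction with
  | _ p ihp =>
  intro y h hn
  refine ⟨_, ?_⟩
  rintro ⟨y', z'⟩ ⟨-, h2, h3, u, u', hst, hy', hval⟩
  change _ ∉ _ at h2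
  change ¬ ∃ w, y = w ++ [Sum.inl (inv p.2)] at h3
  dsimp only at h2 hst hy' hval
  rw [h.snoc_mem_iff] at h2
  rw [h.ends_iff] at h3
  cases z' with
  | inr e => exact acc_inr S hg _ _
  | inl c' =>
    obtain ⟨m', v', h'⟩ := hy'
    rw [stack_of_NF S hg h, stackAt] at hst
    split_ifs at hst with hc
    · obtain ⟨e, s, hm, hsp, -⟩ := special_spec S (φ := φ) hg hc.2
      dsimp only at hm hc
      subst hm
      dsimp only at hst
      rw [hsp] at hst
      obtain ⟨s₁, rfl⟩ : ∃ s₁ : List C, u = Sum.inr (-e) :: s₁.map Sum.inl := by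
        rcases u with _ | ⟨a, u⟩
        · simp at hst
        · simp only [List.cons_append, List.cons.injEq] at hst
          obtain ⟨rfl, hst⟩ := hst
          obtain ⟨s₁, rfl⟩ := eq_map_of_append_eq hst
          exact ⟨s₁, rfl⟩
      rcases h.exists_split with ⟨h0, -⟩ | ⟨e', y₁, m₁, v₁, he, hy, hy₁, -⟩
      · simp at h0
      · simp only [Option.some.injEq] at he
        subst he
        obtain ⟨y₂, v₂, hy₂, hval₂, -, hcount⟩ := hy₁.mul_of S (φ := φ) (wordVal π s₁)
        have hyy : y' = y₂ := by
          refine h'.unique S hy₂ (φ := φ) ?_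
          rw [hval, hval₂, hy, hc.1, wordVal_append, List.map_nil, wordVal_append, wordVal_cons,
            wordVal_nil, wordVal_cons, wordVal_letter_map, letter_inr, letter_inr, zpow_neg_unit]
          group
        subst hyy
        refine ih (tcount y') ?_ y' _ _ hy₂ rfl c'
        rw [hcount, ← hn, hy, tcount_append, tcount_cons_inr]
        omega
    · obtain ⟨u₁, u₂, hf, rfl, hu⟩ := List.map_eq_append_iff.1 hst
      obtain ⟨d, u₃, rfl, hd, rfl⟩ := List.map_eq_cons_iff.1 hu
      simp only [Sum.inl.injEq] at hd
      subst hd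
      obtain ⟨y₂, v₂, hy₂, hval₂, hv₂, hcount⟩ := h.mul_of S (φ := φ) (wordVal π u₁)
      have hyy : y' = y₂ := by
        refine h'.unique S hy₂ (φ := φ) ?_
        rw [hval, hval₂, wordVal_append, wordVal_letter_map]
      subst hyy
      refine ihp (v₂, d) ⟨h.mem, h2, h3, hc, u₁, u₃, hf, hy₂.mem, ?_⟩ y' hy₂ (hcount.trans hn)
      rwa [wordVal_append]

theorem stack_F3 (hg : IsInvGenSet G π inv) (φ : A ≃* B) :
    WellFounded (Prec S hg φ) := by
  refine ⟨fun ⟨y, z⟩ => ?_⟩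
  cases z with
  | inr e => exact acc_inr S hg y e
  | inl c =>
    by_cases hy : y ∈ normalForms S
    · obtain ⟨m, v, h⟩ := hy
      exact acc_inl S hg _ y m v h rfl c
    · exact ⟨_, fun q hq => absurd hq.1 hy⟩

/-- The class of a normal form consists of the mode of its last syllable and the class of the content
of that syllable; words outside the language form one further class. -/
theorem normalForms_isCong (hg : IsInvGenSet G π inv) (φ : A ≃* B) :
    IsCong (normalForms S) (stack S hg φ) (F := Option (Σ m : Option ℤˣ, (S m).F))
      (fun y => (run (fun m => (S m).L) y).map fun p => ⟨p.1, (S p.1).c p.2⟩) := by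
  -- equality of classes, unfolded
  have key : ∀ {r r' : Option (Option ℤˣ × List C)},
      (r.map fun p => (⟨p.1, (S p.1).c p.2⟩ : Σ m : Option ℤˣ, (S m).F)) =
        (r'.map fun p => ⟨p.1, (S p.1).c p.2⟩) →
      (r = none ∧ r' = none) ∨ ∃ m v v', r = some (m, v) ∧ r' = some (m, v') ∧
        (S m).c v = (S m).c v' := by
    rintro (_ | ⟨m, v⟩) (_ | ⟨m', v'⟩) h
    · exact Or.inl ⟨rfl, rfl⟩
    · simp at h
    · simp at h
    · simp only [Option.map_some, Option.some.injEq, Sigma.mk.injEq] at h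
      obtain ⟨rfl, h⟩ := h
      exact Or.inr ⟨m, v, v', rfl, rfl, eq_of_heq h⟩
  -- emptiness of the current syllable is visible in its class
  have nil_iff : ∀ {m : Option ℤˣ} {v v' : List C}, (S m).c v = (S m).c v' →
      (v = [] ↔ v' = []) := by
    intro m v v' h
    constructor
    · rintro rfl
      exact (S m).cong_nil _ h.symm
    · rintro rfl
      exact (S m).cong_nil _ h
  refine ⟨fun y y' z h => ?_, fun y y' h hy => ?_, fun y y' hy hy' h z => ?_⟩
  · rw [run_snoc, run_snoc]
    rcases key h with ⟨h1, h2⟩ | ⟨m, v, v', h1, h2, h3⟩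
    · rw [h1, h2]
    · rw [h1, h2]
      cases z with
      | inl c =>
        have h4 := (S m).cong.snoc _ _ c h3
        by_cases hv : v ++ [c] ∈ (S m).L
        · have hv' := (S m).cong.mem _ _ h4 hv
          simp [step, hv, hv', h4]
        · have hv' : v' ++ [c] ∉ (S m).L := fun hv' => hv ((S m).cong.mem _ _ h4.symm hv')
          simp [step, hv, hv']
      | inr e => simp only [step, nil_iff h3]
  · rw [mem_normalForms_iff] at hy ⊢
    rcases key h with ⟨h1, -⟩ | ⟨m, v, v', -, h2, -⟩
    · exact absurd h1 hy
    · simp [h2]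
  · cases z with
    | inl c =>
      rcases key h with ⟨h1, -⟩ | ⟨m, v, v', h1, h2, h3⟩
      · exact absurd h1 ((mem_normalForms_iff S).1 hy)
      · have n1 := (run_eq_some_iff S).1 h1
        have n2 := (run_eq_some_iff S).1 h2
        rw [stack_of_NF S hg n1, stack_of_NF S hg n2]
        simp only [stackAt, (S m).cong.eq v v' n1.mem n2.mem h3 c]
        by_cases hv : v = []
        · obtain rfl := (nil_iff h3).1 hv
          rw [hv]
        · rw [if_neg fun h => hv h.1, if_neg fun h => hv ((nil_iff h3).2 h.1)]
    | inr e => rfl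

include S in
theorem autostackable_of_relStacking [Finite C] (hg : IsInvGenSet G π inv) (φ : A ≃* B) :
    Autostackable (HNNExtension G A B φ) := by
  have := Fintype.ofFinite C
  have := fun m => (S m).fin
  obtain ⟨K, hK⟩ := exists_bound S hg φ
  refine ⟨C ⊕ ℤˣ, inferInstance, letter φ π, letterInv inv,
    ⟨normalForms S, K, stack S hg φ⟩, ?_, ?_⟩
  · refine ⟨letter_isInvGenSet S hg, normalForms_existsUnique S, normalForms_prefixClosed S,
      fun y hy z => ⟨stack_val S hg hy z, hK y hy z⟩,
      fun y hy z => stack_degenerate S hg hy z, ?_⟩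
    rintro ⟨s, hs⟩
    exact (wellFounded_iff_isEmpty_descending_chain.1 (stack_F3 S hg φ)).false ⟨s, hs⟩
  · exact isAuto_of_isCong (normalForms_isCong S hg φ) hK

end HNN

end HNNAuto

/-- **Theorem (HNN extensions).** Let `A` and `B` be finitely generated subgroups of a
group `G` and let `φ : A ≅ B`.  If `G` is autostackable respecting `A` and
autostackable respecting `B`, then the HNN extension
`G∗_φ = ⟨G, t ∣ t a t⁻¹ = φ(a)⟩` is autostackable. -/
theorem hnn_extension_autostackable
    {G : Type} [Group G] (A B : Subgroup G) (φ : ↥A ≃* ↥B)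
    (hAfg : A.FG) (hBfg : B.FG)
    (hA : AutostackableRespecting G A) (hB : AutostackableRespecting G B) :
    Autostackable (HNNExtension G A B φ) := by
  -- the disjoint union of the two alphabets serves for all three relative structures
  obtain ⟨X, _, πX, invX, stA, hA, haA, hrA⟩ := hA
  obtain ⟨Y, _, πY, invY, stB, hB, haB, hrB⟩ := hB
  have hg : IsInvGenSet G (Sum.elim πX πY) (Sum.map invX invY) := by
    refine ⟨?_, ?_, ?_, ?_⟩
    · rintro (x | y)
      exacts [hA.gen.ne_one x, hB.gen.ne_one y]
    · rintro (x | y) <;> simp [hA.gen.inv_invol, hB.gen.inv_invol]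
    · rintro (x | y) <;> simp [hA.gen.val_inv, hB.gen.val_inv]
    · rw [eq_top_iff, ← hA.gen.gen]
      refine Subgroup.closure_mono ?_
      rintro _ ⟨x, rfl⟩
      exact ⟨Sum.inl x, rfl⟩
  have hS : ∀ m, Nonempty (HNNAuto.RelStacking (Sum.elim πX πY) (Sum.map invX invY)
      (HNNAuto.modeSub A B m)) := by
    rintro (_ | e)
    · obtain ⟨T⟩ := HNNAuto.relStacking_bot hA haA
      exact T.extend hA.gen Sum.inl Sum.inl_injective (fun _ => rfl) (fun _ => rfl) hg.inv_invol
    · rcases Int.units_eq_one_or e with rfl | rfl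
      · obtain ⟨T⟩ := HNNAuto.relStacking_of_respects hA haA hrA
        exact T.extend hA.gen Sum.inl Sum.inl_injective (fun _ => rfl) (fun _ => rfl) hg.inv_invol
      · obtain ⟨T⟩ := HNNAuto.relStacking_of_respects hB haB hrB
        exact T.extend hB.gen Sum.inr Sum.inr_injective (fun _ => rfl) (fun _ => rfl) hg.inv_invol
  exact HNNAuto.autostackable_of_relStacking (fun m => (hS m).some) hg φ
end
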